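/- arXiv:1605.04193 — 2 statements merged into one kernel-verified Lean document; each statement's English description precedes it below -/
import Mathlib

section
/- Let R > 0 and B > 0, let Ω = {x ∈ ℝ² : |x| < R} be the open disk of radius R, and let A(x) = (−Bx₂/2, Bx₁/2), so that the magnetic field is constant equal to B. Then there exist constants C > 0 and h₀ > 0 such that for all 0 < h < h₀ the lowest Dirichlet Pauli eigenvalue satisfies |λ_{P₋}(h) − B²R² e^{−BR²/(2h)}| ≤ C h B²R² e^{−BR²/(2h)}; in particular λ_{P₋}(h) = B²R² e^{−BR²/(2h)}(1 + O(h)) as h → 0⁺. -/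
/-!
With `b = B / (2h)` the Pauli form is `h²` times `∫ |(∇ - iA) u|² - 2b ∫ |u|²` for the potential
`A = b (-x₂, x₁)`.

*Lower bound.* Expand `u` into Fourier modes in the angle. For the mode `m` and any weight `p`,
completing the square gives `∫ r |y'|² ≥ -∫ (p' + p² / r) |y|²`, so a bound `2b + κ` for the mode
follows from a Riccati inequality for `p`. For `m < 0` the choice `p = 0` suffices. For `m ≥ 0` take
`p = r φ' / φ`, where `φ` is the whole-plane ground state `rᵐ e^(-b r² / 2)` times the torsion
function of the disk, weighted by `e^(-b r²)`; the constant is worst for `m = 0` and is the inverse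
of the torsion function at the centre, an exponential integral with the asymptotics
`e^(b R²) / (4 b² R²)`.

*Upper bound.* For a radial function `u = e^(-b |x|² / 2) W(|x|²)` the form is
`4π ∫ t e^(-b t) W'(t)² dt` over `0 ≤ t ≤ R²`, since the remaining terms are an exact derivative.
The choice `W(t) = 1 - e^(b (t - R²))`, cut off near the boundary, gives `4 b² R² e^(-b R²)` to
leading order.
-/

open MeasureTheory Filter Topology

noncomputable section

abbrev E2 : Type := EuclideanSpace ℝ (Fin 2)

/-- Partial derivative of a complex-valued function in the `i`-th coordinate direction. -/
def pdC (i : Fin 2) (f : E2 → ℂ) (x : E2) : ℂ :=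
  fderiv ℝ f x (EuclideanSpace.single i 1)

/-- Partial derivative of a real-valued function in the `i`-th coordinate direction. -/
def pdR (i : Fin 2) (f : E2 → ℝ) (x : E2) : ℝ :=
  fderiv ℝ f x (EuclideanSpace.single i 1)

/-- The Laplacian `Δf = ∂₁²f + ∂₂²f`. -/
def lapl (f : E2 → ℝ) (x : E2) : ℝ :=
  pdR 0 (pdR 0 f) x + pdR 1 (pdR 1 f) x

/-- The Pauli quadratic form
`Q_h(u) = ∫_Ω (|h∂₁u − iA₁u|² + |h∂₂u − iA₂u|²) dx − h∫_Ω B|u|² dx`. -/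
def pauliQ (Ω : Set E2) (A₁ A₂ B : E2 → ℝ) (h : ℝ) (u : E2 → ℂ) : ℝ :=
  (∫ x in Ω, (‖(h : ℂ) * pdC 0 u x - Complex.I * (A₁ x : ℂ) * u x‖ ^ 2
      + ‖(h : ℂ) * pdC 1 u x - Complex.I * (A₂ x : ℂ) * u x‖ ^ 2))
    - h * ∫ x in Ω, B x * ‖u x‖ ^ 2

/-- `u ∈ C_c^∞(Ω; ℂ)`. -/
def IsCptSmoothIn (Ω : Set E2) (u : E2 → ℂ) : Prop :=
  ContDiff ℝ (⊤ : ℕ∞) u ∧ HasCompactSupport u ∧ tsupport u ⊆ Ω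

/-- The lowest Dirichlet Pauli eigenvalue
`λ_{P₋}(h) = inf { Q_h(u)/∫_Ω|u|² : 0 ≠ u ∈ C_c^∞(Ω;ℂ) }`. -/
def lambdaP (Ω : Set E2) (A₁ A₂ B : E2 → ℝ) (h : ℝ) : ℝ :=
  sInf { r | ∃ u : E2 → ℂ, IsCptSmoothIn Ω u ∧ u ≠ 0 ∧
    r = pauliQ Ω A₁ A₂ B h u / ∫ x in Ω, ‖u x‖ ^ 2 }

section Development

open Set Real

/-! ### Fourier coefficients on an interval -/

section FourierCoeffOn

variable {E : Type*} [NormedAddCommGroup E] [NormedSpace ℂ E] {a b : ℝ}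

theorem continuous_fourier_smul {X : Type*} [TopologicalSpace X] {G : X → ℝ → E}
    (hG : Continuous (Function.uncurry G)) (T : ℝ) (n : ℤ) :
    Continuous (Function.uncurry fun x (θ : ℝ) => fourier n (θ : AddCircle T) • G x θ) :=
  ((fourier n).continuous.comp ((AddCircle.continuous_mk' T).comp continuous_snd)).smul hG

theorem continuous_fourierCoeffOn {X : Type*} [TopologicalSpace X] [FirstCountableTopology X]
    {G : X → ℝ → E} (hG : Continuous (Function.uncurry G)) (hab : a < b) (n : ℤ) :
    Continuous fun x => fourierCoeffOn hab (G x) n := by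
  simp only [fourierCoeffOn_eq_integral]
  exact (intervalIntegral.continuous_parametric_intervalIntegral_of_continuous'
    (continuous_fourier_smul hG _ _) _ _).const_smul (1 / (b - a))

theorem hasDerivAt_fourierCoeffOn {G G' : ℝ → ℝ → E} (hG : Continuous (Function.uncurry G))
    (hG' : Continuous (Function.uncurry G')) (hd : ∀ r θ, HasDerivAt (G · θ) (G' r θ) r)
    (hab : a < b) (n : ℤ) (r : ℝ) :
    HasDerivAt (fun r => fourierCoeffOn hab (G r) n) (fourierCoeffOn hab (G' r) n) r := by
  simp only [fourierCoeffOn_eq_integral]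
  have hFG := continuous_fourier_smul hG (b - a) (-n)
  have hFG' := continuous_fourier_smul hG' (b - a) (-n)
  obtain ⟨C, hC⟩ := ((isCompact_closedBall r 1).prod (isCompact_uIcc (a := a) (b := b))
    ).exists_bound_of_continuousOn hFG'.continuousOn
  refine (intervalIntegral.hasDerivAt_integral_of_dominated_loc_of_deriv_le
    (F' := fun r θ => fourier (-n) (θ : AddCircle (b - a)) • G' r θ)
    (bound := fun _ => C) (Metric.closedBall_mem_nhds r one_pos)
    (Eventually.of_forall fun r' => (hFG.uncurry_left r').aestronglyMeasurable)
    ((hFG.uncurry_left r).intervalIntegrable _ _)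
    (hFG'.uncurry_left r).aestronglyMeasurable ?_ intervalIntegrable_const ?_).2.const_smul
      (1 / (b - a))
  · exact Eventually.of_forall fun θ hθ r' hr' => hC (r', θ) ⟨hr', uIoc_subset_uIcc hθ⟩
  · exact Eventually.of_forall fun θ _ r' _ => (hd r' θ).const_smul _

theorem fourierCoeffOn_sub {f g : ℝ → E} (hf : Continuous f) (hg : Continuous g) (hab : a < b)
    (n : ℤ) :
    fourierCoeffOn hab (fun θ => f θ - g θ) n
      = fourierCoeffOn hab f n - fourierCoeffOn hab g n := by
  have hint : ∀ {k : ℝ → E}, Continuous k →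
      IntervalIntegrable (fun θ => fourier (-n) (θ : AddCircle (b - a)) • k θ) volume a b :=
    fun hk => Continuous.intervalIntegrable
      (((fourier (-n)).continuous.comp (AddCircle.continuous_mk' _)).smul hk) _ _
  simp only [fourierCoeffOn_eq_integral, smul_sub]
  rw [intervalIntegral.integral_sub (hint hf) (hint hg), smul_sub]

theorem fourierCoeffOn_deriv {f f' : ℝ → ℂ} (hab : a < b) (hf : ∀ θ, HasDerivAt f (f' θ) θ)
    (hf' : Continuous f') (hper : f b = f a) (n : ℤ) :
    fourierCoeffOn hab f' n = 2 * π * Complex.I * n / (b - a) * fourierCoeffOn hab f n := by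
  have hint : IntervalIntegrable f' volume a b := hf'.intervalIntegrable _ _
  rcases eq_or_ne n 0 with rfl | hn
  · rw [fourierCoeffOn_eq_integral]
    simp only [neg_zero, fourier_zero, one_smul]
    rw [intervalIntegral.integral_eq_sub_of_hasDerivAt (fun θ _ => hf θ) hint, hper]
    simp
  · rw [fourierCoeffOn_of_hasDerivAt hab hn (fun θ _ => hf θ) hint, hper, sub_self, mul_zero,
      zero_sub]
    have hn' : (n : ℂ) ≠ 0 := by exact_mod_cast hn
    have hba : (b : ℂ) - a ≠ 0 := by exact_mod_cast (sub_pos.2 hab).ne'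
    field_simp [Complex.I_ne_zero, Real.pi_ne_zero]

theorem hasSum_sq_fourierCoeffOn_of_continuous {f : ℝ → ℂ} (hf : Continuous f) (hab : a < b) :
    HasSum (fun n => (b - a) * ‖fourierCoeffOn hab f n‖ ^ 2) (∫ θ in a..b, ‖f θ‖ ^ 2) := by
  obtain ⟨C, hC⟩ := (isCompact_Icc (a := a) (b := b)).exists_bound_of_continuousOn hf.continuousOn
  have hL2 : MemLp f 2 (volume.restrict (Ioc a b)) :=
    .of_bound hf.aestronglyMeasurable C <| by
      filter_upwards [ae_restrict_mem measurableSet_Ioc] with θ hθ using hC θ ⟨hθ.1.le, hθ.2⟩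
  have hba : b - a ≠ 0 := (sub_pos.2 hab).ne'
  simpa only [smul_eq_mul, mul_inv_cancel_left₀ hba] using
    (hasSum_sq_fourierCoeffOn hab hL2).mul_left (b - a)

end FourierCoeffOn

/-! ### Angular modes -/

/-- The `m`-th angular Fourier coefficient, at radius `r`, of a function `G r θ` of the polar
coordinates, with `θ` running over `(-π, π]`. -/
def angCoeff (G : ℝ → ℝ → ℂ) (m : ℤ) (r : ℝ) : ℂ :=
  fourierCoeffOn (neg_lt_self pi_pos) (G r) m

theorem angCoeff_eq_zero {G : ℝ → ℝ → ℂ} {r : ℝ} (hG : ∀ θ, G r θ = 0) (m : ℤ) :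
    angCoeff G m r = 0 := by
  simp [angCoeff, fourierCoeffOn_eq_integral, hG]

theorem continuous_angCoeff {G : ℝ → ℝ → ℂ} (hG : Continuous (Function.uncurry G)) (m : ℤ) :
    Continuous (angCoeff G m) :=
  continuous_fourierCoeffOn hG _ m

theorem hasSum_sq_angCoeff {G : ℝ → ℝ → ℂ} {r : ℝ} (hG : Continuous (G r)) :
    HasSum (fun m => 2 * π * ‖angCoeff G m r‖ ^ 2) (∫ θ in (-π)..π, ‖G r θ‖ ^ 2) := by
  simpa only [angCoeff, sub_neg_eq_add, ← two_mul] using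
    hasSum_sq_fourierCoeffOn_of_continuous hG (neg_lt_self pi_pos)

theorem lintegral_Ioo_ofReal_mul_norm_sq {G : ℝ → ℝ → ℂ} {r : ℝ} (hr : 0 ≤ r)
    (hG : Continuous (G r)) :
    ∫⁻ θ in Ioo (-π) π, ENNReal.ofReal (r * ‖G r θ‖ ^ 2)
      = ∑' m : ℤ, ENNReal.ofReal (2 * π * (r * ‖angCoeff G m r‖ ^ 2)) := by
  have hsum := (hasSum_sq_angCoeff hG).mul_left r
  have hint : IntegrableOn (fun θ => r * ‖G r θ‖ ^ 2) (Ioo (-π) π) :=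
    (Continuous.integrableOn_Icc (by fun_prop)).mono_set Ioo_subset_Icc_self
  rw [← ofReal_integral_eq_lintegral_ofReal hint (Eventually.of_forall fun θ => by positivity),
    ← integral_Ioc_eq_integral_Ioo, ← intervalIntegral.integral_of_le (by linarith [pi_pos]),
    intervalIntegral.integral_const_mul, ← hsum.tsum_eq,
    ENNReal.ofReal_tsum_of_nonneg (fun m => by positivity) hsum.summable]
  simp only [mul_left_comm r]

theorem lintegral_polar_norm_sq_eq_tsum {G : ℝ → ℝ → ℂ} (hG : Continuous (Function.uncurry G)) :
    ∫⁻ r in Ioi (0 : ℝ), ∫⁻ θ in Ioo (-π) π, ENNReal.ofReal (r * ‖G r θ‖ ^ 2)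
      = ∑' m : ℤ, ∫⁻ r in Ioi (0 : ℝ), ENNReal.ofReal (2 * π * (r * ‖angCoeff G m r‖ ^ 2)) := by
  rw [setLIntegral_congr_fun measurableSet_Ioi fun r hr =>
    lintegral_Ioo_ofReal_mul_norm_sq (le_of_lt hr) (hG.uncurry_left r), lintegral_tsum]
  intro m
  have := continuous_angCoeff hG m
  fun_prop

theorem lintegral_Ioi_ofReal_eq_intervalIntegral {g : ℝ → ℝ} {ρ : ℝ} (hρ : 0 ≤ ρ)
    (hg : Continuous g) (hg0 : ∀ r, 0 < r → 0 ≤ g r) (hgρ : ∀ r, ρ < r → g r = 0) :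
    ∫⁻ r in Ioi (0 : ℝ), ENNReal.ofReal (g r) = ENNReal.ofReal (∫ r in (0 : ℝ)..ρ, g r) := by
  have hpos : 0 ≤ᵐ[volume.restrict (Ioc 0 ρ)] g := by
    filter_upwards [ae_restrict_mem measurableSet_Ioc] with r hr using hg0 r hr.1
  rw [intervalIntegral.integral_of_le hρ, ofReal_integral_eq_lintegral_ofReal
      (hg.integrableOn_Icc.mono_set Ioc_subset_Icc_self) hpos,
    ← Ioc_union_Ioi_eq_Ioi hρ, lintegral_union measurableSet_Ioi (Ioc_disjoint_Ioi le_rfl),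
    setLIntegral_congr_fun (g := fun _ => 0) measurableSet_Ioi fun r hr => by simp [hgρ r hr]]
  simp

/-! ### The exponential integral and the torsion ratio -/

/-- An elementary majorant of half the exponential integral `∫₀ᵗ (eˢ - 1) / s ds`, the radial
torsion function of the constant field. Its leading term is `eᵗ / (2t)` as `t → ∞`; the shift by `3`
keeps it regular at `0`, and `39` is chosen so that its derivative is the larger one. -/
def expIntMajorant (t : ℝ) : ℝ :=
  exp t * (1 / (t + 3) + 39 / (t + 3) ^ 2) / 2

theorem expIntMajorant_pos {t : ℝ} (ht : 0 ≤ t) : 0 < expIntMajorant t := by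
  unfold expIntMajorant
  positivity

theorem hasDerivAt_expIntMajorant {t : ℝ} (ht : 0 ≤ t) :
    HasDerivAt expIntMajorant
      (exp t * (1 / (t + 3) + 38 / (t + 3) ^ 2 - 78 / (t + 3) ^ 3) / 2) t := by
  have hx : t + 3 ≠ 0 := by positivity
  have h₁ : HasDerivAt (fun t : ℝ => t + 3) 1 t := (hasDerivAt_id t).add_const 3
  have h₂ := (hasDerivAt_const t (1 : ℝ)).fun_div h₁ hx
  have h₃ := (hasDerivAt_const t (39 : ℝ)).fun_div (h₁.fun_pow 2) (pow_ne_zero 2 hx)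
  refine (((Real.hasDerivAt_exp t).fun_mul (h₂.fun_add h₃)).div_const 2).congr_deriv ?_
  field_simp
  ring

theorem one_sub_exp_neg_div_le {t : ℝ} (ht : 0 < t) :
    (1 - exp (-t)) / t ≤ 1 / (t + 3) + 12 / (t + 3) ^ 2 := by
  have hsum : 1 / (t + 3) + 12 / (t + 3) ^ 2 = (t + 15) / (t + 3) ^ 2 := by
    field_simp
    ring
  rw [hsum, div_le_div_iff₀ ht (by positivity)]
  rcases le_total t 1 with h1 | h1
  · have hexp : 1 - exp (-t) ≤ t := by linarith [add_one_le_exp (-t)]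
    calc (1 - exp (-t)) * (t + 3) ^ 2 ≤ t * (t + 3) ^ 2 := by gcongr
      _ ≤ t * (t + 15) := by gcongr; nlinarith
      _ = (t + 15) * t := mul_comm _ _
  · have hexp : 1 - exp (-t) ≤ 1 := by linarith [exp_pos (-t)]
    calc (1 - exp (-t)) * (t + 3) ^ 2 ≤ 1 * (t + 3) ^ 2 := by gcongr
      _ ≤ (t + 15) * t := by nlinarith

theorem exp_sub_one_div_le_deriv_expIntMajorant {t : ℝ} (ht : 0 < t) :
    (exp t - 1) / (2 * t) ≤ deriv expIntMajorant t := by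
  have hcubic : 78 / (t + 3) ^ 3 ≤ 26 / (t + 3) ^ 2 := by
    rw [div_le_div_iff₀ (by positivity) (by positivity)]
    nlinarith [pow_pos (by positivity : 0 < t + 3) 2]
  have hbound : (1 - exp (-t)) / t
      ≤ 1 / (t + 3) + 38 / (t + 3) ^ 2 - 78 / (t + 3) ^ 3 := by
    have hsplit : 38 / (t + 3) ^ 2 = 12 / (t + 3) ^ 2 + 26 / (t + 3) ^ 2 := by ring
    linarith [one_sub_exp_neg_div_le ht]
  rw [(hasDerivAt_expIntMajorant ht.le).deriv]
  calc (exp t - 1) / (2 * t) = exp t * ((1 - exp (-t)) / t) / 2 := by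
        rw [exp_neg]
        field_simp
    _ ≤ _ := by gcongr

theorem strictMonoOn_expIntMajorant : StrictMonoOn expIntMajorant (Ici 0) := by
  refine strictMonoOn_of_deriv_pos (convex_Ici 0)
    (fun t ht => (hasDerivAt_expIntMajorant ht).continuousAt.continuousWithinAt) fun t ht => ?_
  rw [interior_Ici] at ht
  have ht : 0 < t := ht
  refine lt_of_lt_of_le ?_ (exp_sub_one_div_le_deriv_expIntMajorant ht)
  exact div_pos (sub_pos.2 (one_lt_exp_iff.2 ht)) (by positivity)

theorem expIntMajorant_le {t : ℝ} (ht : 0 < t) :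
    expIntMajorant t ≤ exp t / (2 * t) * (1 + 39 / t) :=
  calc expIntMajorant t ≤ exp t * (1 / t + 39 / t ^ 2) / 2 := by
        unfold expIntMajorant
        gcongr <;> linarith
    _ = exp t / (2 * t) * (1 + 39 / t) := by
        field_simp

/-- The logarithmic derivative, up to a factor, of the torsion function of the disk: it satisfies
the Riccati differential inequality `le_deriv_torsionRatio`, on which the ground state substitution
for the nonnegative angular modes rests. -/
def torsionRatio (T t : ℝ) : ℝ :=
  (exp t - 1) / (expIntMajorant T - expIntMajorant t)

theorem torsionRatio_zero (T : ℝ) : torsionRatio T 0 = 0 := by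
  simp [torsionRatio]

theorem expIntMajorant_sub_pos {T t : ℝ} (ht : 0 ≤ t) (htT : t < T) :
    0 < expIntMajorant T - expIntMajorant t :=
  sub_pos.2 (strictMonoOn_expIntMajorant ht (ht.trans htT.le) htT)

theorem torsionRatio_nonneg {T t : ℝ} (ht : 0 ≤ t) (htT : t < T) : 0 ≤ torsionRatio T t :=
  div_nonneg (sub_nonneg.2 (one_le_exp ht)) (expIntMajorant_sub_pos ht htT).le

theorem hasDerivAt_torsionRatio {T t : ℝ} (ht : 0 ≤ t) (htT : t < T) :
    HasDerivAt (torsionRatio T)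
      ((exp t * (expIntMajorant T - expIntMajorant t) + (exp t - 1) * deriv expIntMajorant t)
        / (expIntMajorant T - expIntMajorant t) ^ 2) t := by
  have hG := (hasDerivAt_expIntMajorant ht).differentiableAt.hasDerivAt
  refine (((Real.hasDerivAt_exp t).sub_const 1).fun_div (hG.const_sub (expIntMajorant T))
    (expIntMajorant_sub_pos ht htT).ne').congr_deriv ?_
  ring

theorem le_deriv_torsionRatio {T t : ℝ} (ht : 0 < t) (htT : t < T) :
    torsionRatio T t + torsionRatio T t ^ 2 / (2 * t) + 1 / expIntMajorant T
      ≤ deriv (torsionRatio T) t := by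
  rw [(hasDerivAt_torsionRatio ht.le htT).deriv]
  have hD := expIntMajorant_sub_pos ht.le htT
  have hexp : 0 ≤ exp t - 1 := sub_nonneg.2 (one_le_exp ht.le)
  have hinv : 1 / expIntMajorant T ≤ 1 / (expIntMajorant T - expIntMajorant t) :=
    one_div_le_one_div_of_le hD (by linarith [expIntMajorant_pos ht.le])
  have hsq : torsionRatio T t ^ 2 / (2 * t)
      ≤ (exp t - 1) * deriv expIntMajorant t / (expIntMajorant T - expIntMajorant t) ^ 2 :=
    calc torsionRatio T t ^ 2 / (2 * t)
        = (exp t - 1) * ((exp t - 1) / (2 * t)) / (expIntMajorant T - expIntMajorant t) ^ 2 := by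
          unfold torsionRatio
          field_simp
      _ ≤ _ := by
          gcongr
          exact exp_sub_one_div_le_deriv_expIntMajorant ht
  have hsum : torsionRatio T t + 1 / (expIntMajorant T - expIntMajorant t)
      = exp t * (expIntMajorant T - expIntMajorant t)
        / (expIntMajorant T - expIntMajorant t) ^ 2 := by
    unfold torsionRatio
    field_simp
    ring
  rw [add_div]
  linarith

/-! ### The radial inequality for a single angular mode -/

/-- Completing the square in `r ‖y'‖² + 2 p ⟪y, y'⟫ + p² ‖y‖² / r` and integrating the derivative of
`p ‖y‖²`, whose boundary values vanish. -/
theorem integral_le_integral_mul_norm_deriv_sq {E : Type*} [NormedAddCommGroup E]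
    [InnerProductSpace ℝ E] {y y' : ℝ → E} {p p' g : ℝ → ℝ} {ρ : ℝ} (hρ : 0 ≤ ρ)
    (hy : ∀ r, HasDerivAt y (y' r) r) (hy' : Continuous y') (hp : ContinuousOn p (Icc 0 ρ))
    (hp' : ∀ r ∈ Ioo 0 ρ, HasDerivAt p (p' r) r) (hg : Continuous g)
    (hzero : p 0 = 0 ∨ y 0 = 0) (hyρ : y ρ = 0)
    (hle : ∀ r ∈ Ioo 0 ρ, g r ≤ -(p' r + p r ^ 2 / r) * ‖y r‖ ^ 2) :
    ∫ r in (0 : ℝ)..ρ, g r ≤ ∫ r in (0 : ℝ)..ρ, r * ‖y' r‖ ^ 2 := by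
  have hyc : Continuous y := continuous_iff_continuousAt.2 fun r => (hy r).continuousAt
  have hφ : Continuous fun r => r * ‖y' r‖ ^ 2 - g r := by fun_prop
  have hFTC := intervalIntegral.sub_le_integral_of_hasDeriv_right_of_le (φ := fun r =>
      r * ‖y' r‖ ^ 2 - g r) hρ (hp.mul (hyc.norm.pow 2).continuousOn)
    (fun r hr => ((hp' r hr).mul (hy r).norm_sq).hasDerivWithinAt)
    hφ.integrableOn_Icc fun r hr => ?_
  · have hbdry : p 0 * ‖y 0‖ ^ 2 = 0 := by rcases hzero with h | h <;> simp [h]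
    rw [intervalIntegral.integral_sub (Continuous.intervalIntegrable (by fun_prop) _ _)
      (hg.intervalIntegrable _ _)] at hFTC
    simp only [Pi.mul_apply, Pi.pow_apply, hyρ, norm_zero] at hFTC
    linarith
  · have hr0 : 0 < r := hr.1
    have hexpand : r * ‖y' r - (p r / r) • y r‖ ^ 2
        = r * ‖y' r‖ ^ 2 - p r * (2 * inner ℝ (y r) (y' r)) + p r ^ 2 / r * ‖y r‖ ^ 2 := by
      rw [norm_sub_sq_real, inner_smul_right, norm_smul, mul_pow, norm_eq_abs, sq_abs,
        real_inner_comm]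
      field_simp
    have hsq : 0 ≤ r * ‖y' r - (p r / r) • y r‖ ^ 2 := by positivity
    have := hle r hr
    linarith

theorem mul_le_sq_div_of_neg_mode {b R κ r : ℝ} {m : ℤ} (hb : 0 < b) (hr : 0 < r) (hrR : r < R)
    (hκR : κ * R ^ 2 ≤ 1) (hm : m < 0) : (2 * b + κ) * r ≤ (m - b * r ^ 2) ^ 2 / r := by
  have hm1 : (m : ℝ) ≤ -1 := by exact_mod_cast Int.le_sub_one_of_lt hm
  have hκr : κ * r ^ 2 ≤ 1 := by
    rcases le_total κ 0 with h | h
    · linarith [mul_nonpos_of_nonpos_of_nonneg h (sq_nonneg r)]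
    · exact hκR.trans' (by gcongr)
  have ht : 0 < b * r ^ 2 := by positivity
  rw [le_div_iff₀ hr]
  nlinarith

/-- For `m ≥ 0`, `modeWeight b R m r / r` is the logarithmic derivative of an approximate
Dirichlet ground state with angular momentum `m`: the part `m - b r²` comes from the ground state
`rᵐ e^(-b r² / 2)` on the whole plane, and `torsionRatio` corrects for the boundary at radius
`R`. -/
def modeWeight (b R : ℝ) (m : ℤ) (r : ℝ) : ℝ :=
  m - b * r ^ 2 - torsionRatio (b * R ^ 2) (b * r ^ 2)

theorem modeWeight_zero_zero (b R : ℝ) : modeWeight b R 0 0 = 0 := by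
  simp [modeWeight, torsionRatio_zero]

theorem hasDerivAt_modeWeight {b R r : ℝ} {m : ℤ} (hb : 0 < b) (hr : 0 ≤ r) (hrR : r < R) :
    HasDerivAt (modeWeight b R m)
      (-(2 * b * r) - deriv (torsionRatio (b * R ^ 2)) (b * r ^ 2) * (2 * b * r)) r := by
  have hsq : HasDerivAt (fun r : ℝ => b * r ^ 2) (2 * b * r) r :=
    ((hasDerivAt_pow 2 r).const_mul b).congr_deriv (by norm_num; ring)
  have hq := (hasDerivAt_torsionRatio (T := b * R ^ 2) (t := b * r ^ 2) (by positivity)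
    (by gcongr)).differentiableAt.hasDerivAt
  exact (hsq.const_sub (m : ℝ)).fun_sub (HasDerivAt.comp (h₂ := torsionRatio _) r hq hsq)

theorem mul_sub_sq_div_le_deriv_modeWeight {b R κ r : ℝ} {m : ℤ} (hb : 0 < b) (hr : 0 < r)
    (hrR : r < R) (hκ : κ * expIntMajorant (b * R ^ 2) ≤ 2 * b) (hm : 0 ≤ m) :
    (2 * b + κ) * r - (m - b * r ^ 2) ^ 2 / r
      ≤ -(deriv (modeWeight b R m) r + modeWeight b R m r ^ 2 / r) := by
  have ht : 0 < b * r ^ 2 := by positivity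
  have htT : b * r ^ 2 < b * R ^ 2 := by gcongr
  have hG := expIntMajorant_pos (ht.trans htT).le
  have hq := torsionRatio_nonneg ht.le htT
  have hq' := le_deriv_torsionRatio ht htT
  rw [(hasDerivAt_modeWeight hb hr.le hrR).deriv, modeWeight]
  set q := torsionRatio (b * R ^ 2) (b * r ^ 2)
  have hκG : κ / (2 * b) ≤ 1 / expIntMajorant (b * R ^ 2) := by
    rw [div_le_div_iff₀ (by positivity) hG]
    linarith
  have hmq : 0 ≤ 2 * m * q / r := by positivity
  have hkey : 0 ≤ 2 * b * r * (deriv (torsionRatio (b * R ^ 2)) (b * r ^ 2)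
      - (q + q ^ 2 / (2 * (b * r ^ 2)) + κ / (2 * b))) :=
    mul_nonneg (by positivity) (by linarith)
  refine sub_nonneg.1 ((add_nonneg hkey hmq).trans_eq ?_)
  field_simp
  ring

section Mode

variable {y y' w : ℝ → ℂ} {b R ρ κ : ℝ} {m : ℤ}

theorem eq_zero_or_apply_zero_eq_zero
    (hyw : ∀ r : ℝ, r * w r = Complex.I * (m - b * r ^ 2) * y r) : m = 0 ∨ y 0 = 0 := by
  simpa using hyw 0

theorem mul_norm_sq_eq_sq_div_mul_norm_sq {r : ℝ} (hr : 0 < r)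
    (hyw : r * w r = Complex.I * (m - b * r ^ 2) * y r) :
    r * ‖w r‖ ^ 2 = (m - b * r ^ 2) ^ 2 / r * ‖y r‖ ^ 2 := by
  have hcoe : (m - b * r ^ 2 : ℂ) = ((m - b * r ^ 2 : ℝ) : ℂ) := by push_cast; rfl
  have hnorm := congrArg (‖·‖ ^ 2) hyw
  simp only [hcoe, norm_mul, Complex.norm_real, Complex.norm_I, one_mul, mul_pow, norm_eq_abs,
    sq_abs] at hnorm
  field_simp
  linarith

theorem le_integral_mode (hb : 0 < b) (hρ0 : 0 ≤ ρ) (hρ : ρ < R)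
    (hκR : κ * R ^ 2 ≤ 1) (hκ : κ * expIntMajorant (b * R ^ 2) ≤ 2 * b)
    (hy : ∀ r, HasDerivAt y (y' r) r) (hy' : Continuous y') (hw : Continuous w)
    (hyw : ∀ r : ℝ, r * w r = Complex.I * (m - b * r ^ 2) * y r) (hyρ : y ρ = 0) :
    (2 * b + κ) * ∫ r in (0 : ℝ)..ρ, r * ‖y r‖ ^ 2
      ≤ (∫ r in (0 : ℝ)..ρ, r * ‖y' r‖ ^ 2) + ∫ r in (0 : ℝ)..ρ, r * ‖w r‖ ^ 2 := by
  have hyc : Continuous y := continuous_iff_continuousAt.2 fun r => (hy r).continuousAt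
  rw [← sub_le_iff_le_add, ← intervalIntegral.integral_const_mul, ← intervalIntegral.integral_sub
    (Continuous.intervalIntegrable (by fun_prop) _ _)
    (Continuous.intervalIntegrable (by fun_prop) _ _)]
  have hg : Continuous fun r => (2 * b + κ) * (r * ‖y r‖ ^ 2) - r * ‖w r‖ ^ 2 := by fun_prop
  have hg_eq : ∀ r ∈ Ioo 0 ρ, (2 * b + κ) * (r * ‖y r‖ ^ 2) - r * ‖w r‖ ^ 2
      = ((2 * b + κ) * r - (m - b * r ^ 2) ^ 2 / r) * ‖y r‖ ^ 2 := fun r hr => by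
    rw [mul_norm_sq_eq_sq_div_mul_norm_sq hr.1 (hyw r)]
    ring
  rcases lt_or_ge m 0 with hm | hm
  · refine integral_le_integral_mul_norm_deriv_sq (p := 0) (p' := 0) hρ0 hy hy' continuousOn_const
      (fun r _ => hasDerivAt_const r 0) hg (.inl rfl) hyρ fun r hr => ?_
    have := mul_le_sq_div_of_neg_mode hb hr.1 (hr.2.trans hρ) hκR hm
    rw [hg_eq r hr]
    simpa using mul_nonpos_of_nonpos_of_nonneg (sub_nonpos.2 this) (sq_nonneg ‖y r‖)
  · have hp : ∀ r ∈ Icc 0 ρ, HasDerivAt (modeWeight b R m) (deriv (modeWeight b R m) r) r :=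
      fun r hr => (hasDerivAt_modeWeight hb hr.1 (hr.2.trans_lt hρ)).differentiableAt.hasDerivAt
    refine integral_le_integral_mul_norm_deriv_sq hρ0 hy hy'
      (fun r hr => (hp r hr).continuousAt.continuousWithinAt)
      (fun r hr => hp r (Ioo_subset_Icc_self hr)) hg ?_ hyρ fun r hr => ?_
    · refine (eq_zero_or_apply_zero_eq_zero hyw).imp_left fun hm0 => ?_
      rw [hm0, modeWeight_zero_zero]
    · rw [hg_eq r hr]
      gcongr
      exact mul_sub_sq_div_le_deriv_modeWeight hb hr.1 (hr.2.trans hρ) hκ hm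

end Mode

/-! ### Polar coordinates -/

/-- The radial unit vector `(cos θ, sin θ)`. -/
def eRad (θ : ℝ) : E2 := !₂[cos θ, sin θ]

/-- The tangential unit vector `(-sin θ, cos θ)`. -/
def eTan (θ : ℝ) : E2 := !₂[-sin θ, cos θ]

theorem eRad_eq (θ : ℝ) : eRad θ =
    cos θ • EuclideanSpace.single (0 : Fin 2) (1 : ℝ)
      + sin θ • EuclideanSpace.single (1 : Fin 2) (1 : ℝ) := by
  ext i
  fin_cases i <;> simp [eRad]

theorem eTan_eq (θ : ℝ) : eTan θ =
    -sin θ • EuclideanSpace.single (0 : Fin 2) (1 : ℝ)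
      + cos θ • EuclideanSpace.single (1 : Fin 2) (1 : ℝ) := by
  ext i
  fin_cases i <;> simp [eTan]

theorem hasDerivAt_eRad (θ : ℝ) : HasDerivAt eRad (eTan θ) θ := by
  rw [funext eRad_eq, eTan_eq]
  exact ((hasDerivAt_cos θ).smul_const _).add ((hasDerivAt_sin θ).smul_const _)

theorem continuous_eRad : Continuous eRad :=
  continuous_iff_continuousAt.2 fun θ => (hasDerivAt_eRad θ).continuousAt

theorem continuous_eTan : Continuous eTan := by
  rw [funext eTan_eq]
  fun_prop

theorem norm_eRad (θ : ℝ) : ‖eRad θ‖ = 1 := by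
  simp [EuclideanSpace.norm_eq, eRad, Fin.sum_univ_two]

theorem lintegral_eq_lintegral_polar {g : E2 → ENNReal} (hg : Measurable g) :
    ∫⁻ x, g x = ∫⁻ r in Ioi (0 : ℝ), ∫⁻ θ in Ioo (-π) π, ENNReal.ofReal r * g (r • eRad θ) := by
  have hm : Measurable fun p : Fin 2 → ℝ => g (WithLp.toLp 2 p) :=
    hg.comp (PiLp.volume_preserving_toLp (Fin 2)).measurable
  have hm' : Measurable fun q : ℝ × ℝ => g !₂[q.1, q.2] :=
    hm.comp (MeasurableEquiv.finTwoArrow (α := ℝ)).symm.measurable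
  have hprod : ∫⁻ x, g x = ∫⁻ q : ℝ × ℝ, g !₂[q.1, q.2] :=
    calc ∫⁻ x, g x = ∫⁻ p : Fin 2 → ℝ, g (WithLp.toLp 2 p) :=
          ((PiLp.volume_preserving_toLp (Fin 2)).lintegral_comp hg).symm
      _ = ∫⁻ q : ℝ × ℝ, g !₂[q.1, q.2] :=
          (((volume_preserving_finTwoArrow ℝ).symm).lintegral_comp hm).symm
  rw [hprod, ← lintegral_comp_polarCoord_symm, polarCoord_target, Measure.volume_eq_prod,
    setLIntegral_prod]
  · refine lintegral_congr fun r => lintegral_congr fun θ => ?_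
    rw [smul_eq_mul]
    congr 2
    ext i
    fin_cases i <;> simp [eRad]
  · exact ((ENNReal.measurable_ofReal.comp measurable_fst).mul
      (hm'.comp continuous_polarCoord_symm.measurable)).aemeasurable

/-- The function `u` in polar coordinates. -/
def polarFun (u : E2 → ℂ) (r θ : ℝ) : ℂ := u (r • eRad θ)

/-- The radial derivative of `u` in polar coordinates. -/
def radialDeriv (u : E2 → ℂ) (r θ : ℝ) : ℂ := fderiv ℝ u (r • eRad θ) (eRad θ)

/-- The tangential covariant derivative of `u`, in polar coordinates, for the potential
`b (-x₂, x₁)`. -/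
def tangentialDeriv (b : ℝ) (u : E2 → ℂ) (r θ : ℝ) : ℂ :=
  fderiv ℝ u (r • eRad θ) (eTan θ) - Complex.I * (b * r) * u (r • eRad θ)

/-- The kinetic energy density `|(∇ - iA) u|²` for the potential `A = b (-x₂, x₁)`, whose field is
the constant `2b`. -/
def magDens (b : ℝ) (u : E2 → ℂ) (x : E2) : ℝ :=
  ‖pdC 0 u x + Complex.I * (b * x 1) * u x‖ ^ 2 + ‖pdC 1 u x - Complex.I * (b * x 0) * u x‖ ^ 2

theorem magDens_nonneg (b : ℝ) (u : E2 → ℂ) (x : E2) : 0 ≤ magDens b u x := by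
  unfold magDens
  positivity

theorem norm_sq_add_norm_sq_rotate {c s : ℝ} (hcs : s ^ 2 + c ^ 2 = 1) (z w : ℂ) :
    ‖z‖ ^ 2 + ‖w‖ ^ 2 = ‖c * z + s * w‖ ^ 2 + ‖-s * z + c * w‖ ^ 2 := by
  simp only [← Complex.normSq_eq_norm_sq, Complex.normSq_apply, Complex.add_re, Complex.add_im,
    Complex.mul_re, Complex.mul_im, Complex.neg_re, Complex.neg_im, Complex.ofReal_re,
    Complex.ofReal_im]
  linear_combination (-(z.re ^ 2 + z.im ^ 2 + w.re ^ 2 + w.im ^ 2)) * hcs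

theorem fderiv_apply_eRad (u : E2 → ℂ) (x : E2) (θ : ℝ) :
    fderiv ℝ u x (eRad θ) = cos θ * pdC 0 u x + sin θ * pdC 1 u x := by
  rw [eRad_eq θ, map_add, map_smul, map_smul, Complex.real_smul, Complex.real_smul, pdC, pdC]

theorem fderiv_apply_eTan (u : E2 → ℂ) (x : E2) (θ : ℝ) :
    fderiv ℝ u x (eTan θ) = -sin θ * pdC 0 u x + cos θ * pdC 1 u x := by
  rw [eTan_eq θ, map_add, map_smul, map_smul, Complex.real_smul, Complex.real_smul, pdC, pdC,
    Complex.ofReal_neg]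

theorem magDens_polar (b : ℝ) (u : E2 → ℂ) (r θ : ℝ) :
    magDens b u (r • eRad θ) = ‖radialDeriv u r θ‖ ^ 2 + ‖tangentialDeriv b u r θ‖ ^ 2 := by
  have hx0 : (r • eRad θ) 0 = r * cos θ := by simp [eRad]
  have hx1 : (r • eRad θ) 1 = r * sin θ := by simp [eRad]
  have hcs : (sin θ : ℂ) ^ 2 + (cos θ : ℂ) ^ 2 = 1 := by exact_mod_cast sin_sq_add_cos_sq θ
  rw [magDens, norm_sq_add_norm_sq_rotate (sin_sq_add_cos_sq θ), radialDeriv, tangentialDeriv,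
    fderiv_apply_eRad, fderiv_apply_eTan, hx0, hx1, Complex.ofReal_mul, Complex.ofReal_mul]
  congr 3
  · ring
  · linear_combination (-(Complex.I * (b * r) * u (r • eRad θ))) * hcs

section Polar

variable {u : E2 → ℂ} {b ρ : ℝ}

theorem continuous_magDens (hu : ContDiff ℝ 1 u) : Continuous (magDens b u) := by
  have hd : ∀ i, Continuous (pdC i u) := fun i =>
    (hu.continuous_fderiv one_ne_zero).clm_apply continuous_const
  have := hd 0
  have := hd 1
  have := hu.continuous
  unfold magDens
  fun_prop

theorem continuous_smul_eRad : Continuous fun p : ℝ × ℝ => p.1 • eRad p.2 :=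
  continuous_fst.smul (continuous_eRad.comp continuous_snd)

theorem continuous_polarFun (hu : Continuous u) : Continuous (Function.uncurry (polarFun u)) :=
  hu.comp continuous_smul_eRad

theorem continuous_radialDeriv (hu : ContDiff ℝ 1 u) :
    Continuous (Function.uncurry (radialDeriv u)) :=
  ((hu.continuous_fderiv one_ne_zero).comp continuous_smul_eRad).clm_apply
    (continuous_eRad.comp continuous_snd)

theorem continuous_fderiv_eTan (hu : ContDiff ℝ 1 u) :
    Continuous (Function.uncurry fun r θ : ℝ => fderiv ℝ u (r • eRad θ) (eTan θ)) :=
  ((hu.continuous_fderiv one_ne_zero).comp continuous_smul_eRad).clm_apply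
    (continuous_eTan.comp continuous_snd)

theorem continuous_tangentialDeriv (hu : ContDiff ℝ 1 u) :
    Continuous (Function.uncurry (tangentialDeriv b u)) :=
  (continuous_fderiv_eTan hu).sub
    (Continuous.mul (by fun_prop) (continuous_polarFun hu.continuous))

theorem hasDerivAt_polarFun_left (hu : Differentiable ℝ u) (r θ : ℝ) :
    HasDerivAt (polarFun u · θ) (radialDeriv u r θ) r := by
  have hray : HasDerivAt (fun r : ℝ => r • eRad θ) (eRad θ) r := by
    simpa using (hasDerivAt_id r).smul_const (eRad θ)
  exact (hu _).hasFDerivAt.comp_hasDerivAt r hray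

theorem hasDerivAt_polarFun_right (hu : Differentiable ℝ u) (r θ : ℝ) :
    HasDerivAt (polarFun u r) (r * fderiv ℝ u (r • eRad θ) (eTan θ)) θ := by
  have hcircle : HasDerivAt (fun θ : ℝ => r • eRad θ) (r • eTan θ) θ :=
    (hasDerivAt_eRad θ).const_smul r
  refine ((hu _).hasFDerivAt.comp_hasDerivAt θ hcircle).congr_deriv ?_
  rw [map_smul, Complex.real_smul]

theorem hasDerivAt_angCoeff_polarFun (hu : ContDiff ℝ 1 u) (m : ℤ) (r : ℝ) :
    HasDerivAt (angCoeff (polarFun u) m) (angCoeff (radialDeriv u) m r) r :=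
  hasDerivAt_fourierCoeffOn (continuous_polarFun hu.continuous) (continuous_radialDeriv hu)
    (hasDerivAt_polarFun_left (hu.differentiable one_ne_zero)) _ m r

theorem mul_angCoeff_tangentialDeriv (hu : ContDiff ℝ 1 u) (m : ℤ) (r : ℝ) :
    r * angCoeff (tangentialDeriv b u) m r
      = Complex.I * (m - b * r ^ 2) * angCoeff (polarFun u) m r := by
  have hper : polarFun u r π = polarFun u r (-π) := by simp [polarFun, eRad]
  have hc : Continuous fun θ => r * fderiv ℝ u (r • eRad θ) (eTan θ) :=
    continuous_const.mul ((continuous_fderiv_eTan hu).uncurry_left r)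
  have hsplit : (fun θ => r * tangentialDeriv b u r θ) = fun θ =>
      r * fderiv ℝ u (r • eRad θ) (eTan θ) - Complex.I * (b * r ^ 2) * polarFun u r θ := by
    ext θ
    rw [tangentialDeriv, polarFun]
    ring
  have hm : 2 * π * Complex.I * m / ((π : ℂ) - (-π : ℝ)) = Complex.I * m := by
    have : (π : ℂ) ≠ 0 := by exact_mod_cast pi_ne_zero
    push_cast
    field_simp
    ring
  have hc' : Continuous fun θ => Complex.I * (b * r ^ 2) * polarFun u r θ :=
    continuous_const.mul ((continuous_polarFun hu.continuous).uncurry_left r)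
  calc r * angCoeff (tangentialDeriv b u) m r
      = fourierCoeffOn (neg_lt_self pi_pos) (fun θ => r * tangentialDeriv b u r θ) m := by
        rw [fourierCoeffOn.const_mul, angCoeff]
    _ = Complex.I * m * angCoeff (polarFun u) m r
          - Complex.I * (b * r ^ 2) * angCoeff (polarFun u) m r := by
        rw [hsplit, fourierCoeffOn_sub hc hc', fourierCoeffOn_deriv (neg_lt_self pi_pos)
          (hasDerivAt_polarFun_right (hu.differentiable one_ne_zero) r) hc hper,
          fourierCoeffOn.const_mul, hm, angCoeff]
    _ = _ := by ring

theorem lintegral_norm_sq_eq_tsum (hu : Continuous u) :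
    ∫⁻ x, ENNReal.ofReal (‖u x‖ ^ 2) = ∑' m : ℤ, ∫⁻ r in Ioi (0 : ℝ),
      ENNReal.ofReal (2 * π * (r * ‖angCoeff (polarFun u) m r‖ ^ 2)) := by
  rw [← lintegral_polar_norm_sq_eq_tsum (continuous_polarFun hu),
    lintegral_eq_lintegral_polar (by fun_prop)]
  exact setLIntegral_congr_fun measurableSet_Ioi fun r hr => lintegral_congr fun θ =>
    (ENNReal.ofReal_mul (le_of_lt hr)).symm

theorem lintegral_magDens_eq_tsum (hu : ContDiff ℝ 1 u) :
    ∫⁻ x, ENNReal.ofReal (magDens b u x) = ∑' m : ℤ,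
      ((∫⁻ r in Ioi (0 : ℝ), ENNReal.ofReal (2 * π * (r * ‖angCoeff (radialDeriv u) m r‖ ^ 2)))
        + ∫⁻ r in Ioi (0 : ℝ),
            ENNReal.ofReal (2 * π * (r * ‖angCoeff (tangentialDeriv b u) m r‖ ^ 2))) := by
  have hmeas : Measurable (Function.uncurry fun r θ : ℝ =>
      ENNReal.ofReal (r * ‖radialDeriv u r θ‖ ^ 2)) :=
    (continuous_fst.mul ((continuous_radialDeriv hu).norm.pow 2)).measurable.ennreal_ofReal
  rw [ENNReal.tsum_add, ← lintegral_polar_norm_sq_eq_tsum (continuous_radialDeriv hu),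
    ← lintegral_polar_norm_sq_eq_tsum (continuous_tangentialDeriv hu),
    lintegral_eq_lintegral_polar (continuous_magDens hu).measurable.ennreal_ofReal,
    ← lintegral_add_left hmeas.lintegral_prod_right]
  refine setLIntegral_congr_fun measurableSet_Ioi fun r hr => ?_
  have hr : (0 : ℝ) ≤ r := le_of_lt hr
  have hmr : Measurable fun θ => ENNReal.ofReal (r * ‖radialDeriv u r θ‖ ^ 2) :=
    hmeas.comp measurable_prodMk_left
  rw [← lintegral_add_left hmr]
  refine lintegral_congr fun θ => ?_
  rw [← ENNReal.ofReal_mul hr, magDens_polar, mul_add,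
    ENNReal.ofReal_add (by positivity) (by positivity)]

/-! ### The lower bound -/

theorem smul_eRad_notMem_tsupport (hsupp : tsupport u ⊆ Metric.ball 0 ρ) {r : ℝ} (hr : ρ ≤ r)
    (θ : ℝ) : r • eRad θ ∉ tsupport u := fun h => by
  have hlt := hsupp h
  rw [mem_ball_zero_iff, norm_smul, norm_eRad, mul_one] at hlt
  exact (hr.trans (le_abs_self r)).not_gt hlt

theorem polarFun_eq_zero (hsupp : tsupport u ⊆ Metric.ball 0 ρ) {r : ℝ} (hr : ρ ≤ r) (θ : ℝ) :
    polarFun u r θ = 0 :=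
  image_eq_zero_of_notMem_tsupport (f := u) (smul_eRad_notMem_tsupport hsupp hr θ)

theorem radialDeriv_eq_zero (hsupp : tsupport u ⊆ Metric.ball 0 ρ) {r : ℝ} (hr : ρ ≤ r) (θ : ℝ) :
    radialDeriv u r θ = 0 := by
  simp [radialDeriv, fderiv_of_notMem_tsupport ℝ (smul_eRad_notMem_tsupport hsupp hr θ)]

theorem tangentialDeriv_eq_zero (hsupp : tsupport u ⊆ Metric.ball 0 ρ) {r : ℝ} (hr : ρ ≤ r)
    (θ : ℝ) : tangentialDeriv b u r θ = 0 := by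
  have hx := smul_eRad_notMem_tsupport hsupp hr θ
  simp [tangentialDeriv, fderiv_of_notMem_tsupport ℝ hx, image_eq_zero_of_notMem_tsupport hx]

theorem lintegral_Ioi_mul_norm_angCoeff_sq {G : ℝ → ℝ → ℂ} (hG : Continuous (Function.uncurry G))
    (hρ : 0 ≤ ρ) (hGρ : ∀ r, ρ ≤ r → ∀ θ, G r θ = 0) (m : ℤ) :
    ∫⁻ r in Ioi (0 : ℝ), ENNReal.ofReal (2 * π * (r * ‖angCoeff G m r‖ ^ 2))
      = ENNReal.ofReal (2 * π * ∫ r in (0 : ℝ)..ρ, r * ‖angCoeff G m r‖ ^ 2) := by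
  have hc := continuous_angCoeff hG m
  rw [← intervalIntegral.integral_const_mul]
  refine lintegral_Ioi_ofReal_eq_intervalIntegral hρ (by fun_prop) (fun r hr => by positivity)
    fun r hr => ?_
  simp [angCoeff_eq_zero (hGρ r hr.le)]

theorem le_lintegral_magDens {R κ : ℝ} (hb : 0 < b) (hρ0 : 0 ≤ ρ) (hρ : ρ < R) (hκ0 : 0 ≤ κ)
    (hκR : κ * R ^ 2 ≤ 1) (hκ : κ * expIntMajorant (b * R ^ 2) ≤ 2 * b) (hu : ContDiff ℝ 1 u)
    (hsupp : tsupport u ⊆ Metric.ball 0 ρ) :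
    ENNReal.ofReal (2 * b + κ) * ∫⁻ x, ENNReal.ofReal (‖u x‖ ^ 2)
      ≤ ∫⁻ x, ENNReal.ofReal (magDens b u x) := by
  rw [lintegral_norm_sq_eq_tsum hu.continuous, lintegral_magDens_eq_tsum hu,
    ← ENNReal.tsum_mul_left]
  refine ENNReal.tsum_le_tsum fun m => ?_
  have hpos : ∀ G : ℝ → ℝ → ℂ, 0 ≤ ∫ r in (0 : ℝ)..ρ, r * ‖angCoeff G m r‖ ^ 2 := fun G =>
    intervalIntegral.integral_nonneg hρ0 fun r hr => mul_nonneg hr.1 (by positivity)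
  have hmode := le_integral_mode hb hρ0 hρ hκR hκ (hasDerivAt_angCoeff_polarFun hu m)
    (continuous_angCoeff (continuous_radialDeriv hu) m)
    (continuous_angCoeff (continuous_tangentialDeriv hu) m) (mul_angCoeff_tangentialDeriv hu m)
    (angCoeff_eq_zero (polarFun_eq_zero hsupp le_rfl) m)
  rw [lintegral_Ioi_mul_norm_angCoeff_sq (continuous_polarFun hu.continuous) hρ0
      (fun r hr => polarFun_eq_zero hsupp hr),
    lintegral_Ioi_mul_norm_angCoeff_sq (continuous_radialDeriv hu) hρ0
      (fun r hr => radialDeriv_eq_zero hsupp hr),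
    lintegral_Ioi_mul_norm_angCoeff_sq (continuous_tangentialDeriv hu) hρ0
      (fun r hr => tangentialDeriv_eq_zero hsupp hr),
    ← ENNReal.ofReal_mul (by positivity),
    ← ENNReal.ofReal_add (mul_nonneg two_pi_pos.le (hpos _)) (mul_nonneg two_pi_pos.le (hpos _))]
  refine ENNReal.ofReal_le_ofReal ?_
  rw [mul_left_comm, ← mul_add]
  exact mul_le_mul_of_nonneg_left hmode two_pi_pos.le

end Polar

/-- The quadratic form `∫ |(∇ - iA) u|² - 2b ∫ |u|²` on the disk of radius `R`, for the potential
`A = b (-x₂, x₁)`: the Pauli form for `h = 1` and the constant field `2b`. -/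
def pauliForm (b R : ℝ) (u : E2 → ℂ) : ℝ :=
  (∫ x in Metric.ball 0 R, magDens b u x) - 2 * b * ∫ x in Metric.ball 0 R, ‖u x‖ ^ 2

section CompactSupport

variable {u : E2 → ℂ} {b R : ℝ} {Ω : Set E2}

theorem norm_sq_eq_zero_of_notMem_tsupport {x : E2} (hx : x ∉ tsupport u) : ‖u x‖ ^ 2 = 0 := by
  simp [image_eq_zero_of_notMem_tsupport hx]

theorem magDens_eq_zero_of_notMem_tsupport {x : E2} (hx : x ∉ tsupport u) :
    magDens b u x = 0 := by
  simp [magDens, pdC, fderiv_of_notMem_tsupport ℝ hx, image_eq_zero_of_notMem_tsupport hx]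

theorem ofReal_setIntegral_eq_lintegral {g : E2 → ℝ} (hg : Continuous g) (hg0 : ∀ x, 0 ≤ g x)
    (hcs : HasCompactSupport u) (hsub : tsupport u ⊆ Ω) (hgu : ∀ x, x ∉ tsupport u → g x = 0) :
    ENNReal.ofReal (∫ x in Ω, g x) = ∫⁻ x, ENNReal.ofReal (g x) := by
  rw [setIntegral_eq_integral_of_forall_compl_eq_zero fun x hx => hgu x fun h => hx (hsub h)]
  exact ofReal_integral_eq_lintegral_ofReal
    (hg.integrable_of_hasCompactSupport (.intro hcs hgu)) (Eventually.of_forall hg0)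

theorem setIntegral_norm_sq_pos (hu : IsCptSmoothIn Ω u) (hne : u ≠ 0) :
    0 < ∫ x in Ω, ‖u x‖ ^ 2 := by
  obtain ⟨hsm, hcs, hsub⟩ := hu
  obtain ⟨x, hx⟩ := Function.ne_iff.1 hne
  have hc := hsm.continuous
  rw [setIntegral_eq_integral_of_forall_compl_eq_zero fun x hx =>
    norm_sq_eq_zero_of_notMem_tsupport fun h => hx (hsub h)]
  refine Continuous.integral_pos_of_hasCompactSupport_nonneg_nonzero (x := x) (by fun_prop)
    (.intro hcs fun x hx => norm_sq_eq_zero_of_notMem_tsupport hx) (fun x => by positivity) ?_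
  simpa using hx

theorem mul_setIntegral_norm_sq_le_pauliForm {κ : ℝ} (hb : 0 < b) (hR : 0 < R) (hκ0 : 0 ≤ κ)
    (hκR : κ * R ^ 2 ≤ 1) (hκ : κ * expIntMajorant (b * R ^ 2) ≤ 2 * b)
    (hu : IsCptSmoothIn (Metric.ball 0 R) u) :
    κ * ∫ x in Metric.ball 0 R, ‖u x‖ ^ 2 ≤ pauliForm b R u := by
  obtain ⟨hsm, hcs, hsub⟩ := hu
  have hu1 : ContDiff ℝ 1 u := hsm.of_le (by exact_mod_cast le_top)
  obtain ⟨ρ, ⟨hρ0, hρ⟩, hsupp⟩ := exists_pos_lt_subset_ball hR (isClosed_tsupport u) hsub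
  have hc := hsm.continuous
  have hkin := le_lintegral_magDens hb hρ0.le hρ hκ0 hκR hκ hu1 hsupp
  rw [← ofReal_setIntegral_eq_lintegral (g := fun x => ‖u x‖ ^ 2) (by fun_prop)
      (fun x => sq_nonneg ‖u x‖) hcs hsub fun x => norm_sq_eq_zero_of_notMem_tsupport,
    ← ofReal_setIntegral_eq_lintegral (continuous_magDens hu1) (magDens_nonneg b u) hcs hsub
      fun x => magDens_eq_zero_of_notMem_tsupport,
    ← ENNReal.ofReal_mul (by positivity),
    ENNReal.ofReal_le_ofReal_iff (integral_nonneg (magDens_nonneg b u))] at hkin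
  rw [pauliForm]
  linarith

end CompactSupport

/-- The leading term `4 b² R² exp (-b R²)` of the lowest eigenvalue of `pauliForm b R`. -/
def pauliLeadingTerm (b R : ℝ) : ℝ := 4 * b ^ 2 * R ^ 2 * exp (-(b * R ^ 2))

theorem pauliLeadingTerm_pos {b R : ℝ} (hb : 0 < b) (hR : 0 < R) : 0 < pauliLeadingTerm b R := by
  unfold pauliLeadingTerm
  positivity

theorem four_mul_sq_mul_exp_neg_le_one {T : ℝ} (hT : 24 ≤ T) : 4 * T ^ 2 * exp (-T) ≤ 1 := by
  have hexp : T ^ 3 / 6 ≤ exp T := by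
    simpa [Nat.factorial] using pow_div_factorial_le_exp T (by linarith) 3
  rw [exp_neg, ← div_eq_mul_inv, div_le_one (exp_pos T)]
  nlinarith [sq_nonneg T]

theorem pauliLeadingTerm_mul_le_pauliForm {b R : ℝ} {u : E2 → ℂ} (hb : 0 < b) (hR : 0 < R)
    (hT : 39 ≤ b * R ^ 2) (hu : IsCptSmoothIn (Metric.ball 0 R) u) :
    pauliLeadingTerm b R * (1 - 39 / (b * R ^ 2)) * ∫ x in Metric.ball 0 R, ‖u x‖ ^ 2
      ≤ pauliForm b R u := by
  have hT0 : 0 < b * R ^ 2 := by positivity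
  have hδ : 0 ≤ 1 - 39 / (b * R ^ 2) := sub_nonneg.2 ((div_le_one hT0).2 hT)
  have hκ0 := mul_nonneg (pauliLeadingTerm_pos hb hR).le hδ
  refine mul_setIntegral_norm_sq_le_pauliForm hb hR hκ0 ?_ ?_ hu
  · calc pauliLeadingTerm b R * (1 - 39 / (b * R ^ 2)) * R ^ 2
        ≤ pauliLeadingTerm b R * 1 * R ^ 2 := by
          have := (pauliLeadingTerm_pos hb hR).le
          gcongr
          linarith [show 0 ≤ 39 / (b * R ^ 2) by positivity]
      _ = 4 * (b * R ^ 2) ^ 2 * exp (-(b * R ^ 2)) := by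
          rw [pauliLeadingTerm]
          ring
      _ ≤ 1 := four_mul_sq_mul_exp_neg_le_one (by linarith)
  · calc pauliLeadingTerm b R * (1 - 39 / (b * R ^ 2)) * expIntMajorant (b * R ^ 2)
        ≤ pauliLeadingTerm b R * (1 - 39 / (b * R ^ 2))
            * (exp (b * R ^ 2) / (2 * (b * R ^ 2)) * (1 + 39 / (b * R ^ 2))) := by
          gcongr
          exact expIntMajorant_le hT0
      _ = 2 * b * (1 - (39 / (b * R ^ 2)) ^ 2) := by
          rw [pauliLeadingTerm, exp_neg]
          field_simp
          ring
      _ ≤ 2 * b := mul_le_of_le_one_right (by positivity) (sub_le_self _ (sq_nonneg _))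

/-! ### The trial function -/

section SoftPos

/-- A smooth minorant of the positive part: `s * exp (-ε / s)` for `0 < s`, and `0` otherwise. -/
def softPos (ε s : ℝ) : ℝ := s * expNegInvGlue (s / ε)

theorem contDiff_softPos (ε : ℝ) {n : ℕ∞} : ContDiff ℝ n (softPos ε) :=
  contDiff_id.mul (expNegInvGlue.contDiff.comp (contDiff_id.div_const ε))

variable {ε s : ℝ}

theorem softPos_of_nonpos (hε : 0 < ε) (hs : s ≤ 0) : softPos ε s = 0 := by
  rw [softPos, expNegInvGlue.zero_of_nonpos (div_nonpos_of_nonpos_of_nonneg hs hε.le), mul_zero]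

theorem softPos_of_pos (hε : 0 < ε) (hs : 0 < s) : softPos ε s = s * exp (-(ε / s)) := by
  rw [softPos, expNegInvGlue, if_neg (div_pos hs hε).not_ge, inv_div]

theorem softPos_nonneg (hε : 0 < ε) (s : ℝ) : 0 ≤ softPos ε s := by
  rcases le_or_gt s 0 with hs | hs
  · exact (softPos_of_nonpos hε hs).ge
  · rw [softPos_of_pos hε hs]
    positivity

theorem sub_le_softPos (hε : 0 < ε) (s : ℝ) : s - ε ≤ softPos ε s := by
  rcases le_or_gt s 0 with hs | hs
  · rw [softPos_of_nonpos hε hs]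
    linarith
  · calc s - ε = s * (-(ε / s) + 1) := by
          field_simp
          ring
      _ ≤ s * exp (-(ε / s)) := mul_le_mul_of_nonneg_left (add_one_le_exp _) hs.le
      _ = softPos ε s := (softPos_of_pos hε hs).symm

theorem deriv_softPos_of_nonpos (hε : 0 < ε) (hs : s ≤ 0) : deriv (softPos ε) s = 0 := by
  have hmin : IsLocalMin (softPos ε) s := Eventually.of_forall fun t => by
    rw [softPos_of_nonpos hε hs]
    exact softPos_nonneg hε t
  exact hmin.deriv_eq_zero

theorem deriv_softPos_of_pos (hε : 0 < ε) (hs : 0 < s) :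
    deriv (softPos ε) s = exp (-(ε / s)) * (1 + ε / s) := by
  have heq : softPos ε =ᶠ[𝓝 s] fun s => s * exp (-(ε / s)) := by
    filter_upwards [lt_mem_nhds hs] with t ht using softPos_of_pos hε ht
  have hinv : HasDerivAt (fun s : ℝ => -(ε / s)) (ε / s ^ 2) s := by
    simpa [div_eq_mul_inv] using ((hasDerivAt_inv hs.ne').const_mul ε).fun_neg
  rw [heq.deriv_eq, ((hasDerivAt_id' s).fun_mul hinv.exp).deriv]
  field_simp

theorem deriv_softPos_sq_le_one (hε : 0 < ε) (s : ℝ) : deriv (softPos ε) s ^ 2 ≤ 1 := by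
  rcases le_or_gt s 0 with hs | hs
  · simp [deriv_softPos_of_nonpos hε hs]
  · rw [deriv_softPos_of_pos hε hs]
    refine pow_le_one₀ (by positivity) ?_
    rw [exp_neg, inv_mul_le_one₀ (exp_pos _), add_comm]
    exact add_one_le_exp _

end SoftPos

theorem setIntegral_ball_comp_norm_sq {R : ℝ} (hR : 0 ≤ R) {f : ℝ → ℝ} (hf : Continuous f) :
    ∫ x in Metric.ball (0 : E2) R, f (‖x‖ ^ 2) = π * ∫ t in (0 : ℝ)..R ^ 2, f t := by
  have hball : (Metric.ball (0 : E2) R).indicator (fun x => f (‖x‖ ^ 2))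
      = fun x => (Iio R).indicator (fun r => f (r ^ 2)) ‖x‖ := by
    ext x
    simp [indicator]
  have hvol : volume.real (Metric.ball (0 : E2) 1) = π := by
    simp [Measure.real, EuclideanSpace.volume_ball_fin_two, pi_pos.le]
  have hsub : ∫ r in (0 : ℝ)..R, f (r ^ 2) * (2 * r) = ∫ t in (0 : ℝ)..R ^ 2, f t := by
    have h := intervalIntegral.integral_comp_mul_deriv (a := 0) (b := R)
      (fun r _ => by simpa using hasDerivAt_pow 2 r) (by fun_prop) hf
    rwa [zero_pow two_ne_zero] at h
  rw [← integral_indicator measurableSet_ball, hball, integral_fun_norm_addHaar, hvol, ← hsub,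
    intervalIntegral.integral_of_le hR, integral_Ioc_eq_integral_Ioo, ← Ioi_inter_Iio,
    ← setIntegral_indicator measurableSet_Iio]
  simp only [finrank_euclideanSpace, Fintype.card_fin, nsmul_eq_mul, smul_eq_mul, Nat.cast_ofNat]
  rw [mul_left_comm, ← integral_const_mul]
  congr 2 with r
  simp only [indicator]
  split_ifs <;> ring

section RadialTrial

variable {b R : ℝ} {W : ℝ → ℝ}

/-- The radial function `exp (-b |x|² / 2) W (|x|²)`. -/
def radialTrial (b : ℝ) (W : ℝ → ℝ) (x : E2) : ℂ :=
  ((exp (-(b / 2 * ‖x‖ ^ 2)) * W (‖x‖ ^ 2) : ℝ) : ℂ)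

theorem exp_neg_half_mul_sq (b t : ℝ) : exp (-(b / 2 * t)) ^ 2 = exp (-(b * t)) := by
  rw [← exp_nat_mul]
  ring_nf

theorem contDiff_radialTrial {n : ℕ∞} (hW : ContDiff ℝ n W) : ContDiff ℝ n (radialTrial b W) :=
  Complex.ofRealCLM.contDiff.comp <|
    (contDiff_const.mul (contDiff_norm_sq ℝ)).neg.exp.mul (hW.comp (contDiff_norm_sq ℝ))

theorem norm_radialTrial_sq (b : ℝ) (W : ℝ → ℝ) (x : E2) :
    ‖radialTrial b W x‖ ^ 2 = exp (-(b * ‖x‖ ^ 2)) * W (‖x‖ ^ 2) ^ 2 := by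
  rw [radialTrial, Complex.norm_real, norm_eq_abs, sq_abs, mul_pow, exp_neg_half_mul_sq]

theorem pdC_radialTrial {x : E2} (hW : DifferentiableAt ℝ W (‖x‖ ^ 2)) (i : Fin 2) :
    pdC i (radialTrial b W) x = ((2 * x i * (exp (-(b / 2 * ‖x‖ ^ 2))
      * (deriv W (‖x‖ ^ 2) - b / 2 * W (‖x‖ ^ 2))) : ℝ) : ℂ) := by
  have hprofile : HasDerivAt (fun t : ℝ => exp (-(b / 2 * t)) * W t)
      (exp (-(b / 2 * ‖x‖ ^ 2)) * (deriv W (‖x‖ ^ 2) - b / 2 * W (‖x‖ ^ 2))) (‖x‖ ^ 2) :=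
    (((hasDerivAt_id' (‖x‖ ^ 2)).const_mul (b / 2)).fun_neg.exp.fun_mul hW.hasDerivAt).congr_deriv
      (by ring)
  have hcomp := Complex.ofRealCLM.hasFDerivAt.comp x
    (hprofile.comp_hasFDerivAt x (hasStrictFDerivAt_norm_sq x).hasFDerivAt)
  have hfderiv : HasFDerivAt (radialTrial b W) _ x := hcomp
  rw [pdC, hfderiv.fderiv]
  simp [EuclideanSpace.inner_single_right]
  ring

theorem magDens_radialTrial {x : E2} (hW : DifferentiableAt ℝ W (‖x‖ ^ 2)) :
    magDens b (radialTrial b W) x = exp (-(b * ‖x‖ ^ 2)) * ‖x‖ ^ 2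
      * (4 * (deriv W (‖x‖ ^ 2) - b / 2 * W (‖x‖ ^ 2)) ^ 2 + b ^ 2 * W (‖x‖ ^ 2) ^ 2) := by
  have hx : ‖x‖ ^ 2 = x 0 ^ 2 + x 1 ^ 2 := by
    simp [EuclideanSpace.norm_sq_eq, Fin.sum_univ_two]
  rw [magDens, pdC_radialTrial hW, pdC_radialTrial hW, radialTrial, ← exp_neg_half_mul_sq b,
    ← Complex.normSq_eq_norm_sq, ← Complex.normSq_eq_norm_sq]
  generalize exp (-(b / 2 * ‖x‖ ^ 2)) = e
  generalize W (‖x‖ ^ 2) = w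
  generalize deriv W (‖x‖ ^ 2) = w'
  rw [hx]
  simp [Complex.normSq_apply]
  ring

theorem setIntegral_norm_radialTrial_sq (hR : 0 ≤ R) (hW : Continuous W) :
    ∫ x in Metric.ball 0 R, ‖radialTrial b W x‖ ^ 2
      = π * ∫ t in (0 : ℝ)..R ^ 2, exp (-(b * t)) * W t ^ 2 := by
  simp only [norm_radialTrial_sq]
  exact setIntegral_ball_comp_norm_sq (f := fun t => exp (-(b * t)) * W t ^ 2) hR (by fun_prop)

theorem hasDerivAt_mul_exp_mul_sq {t : ℝ} (hW : DifferentiableAt ℝ W t) :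
    HasDerivAt (fun t => 2 * b * t * exp (-(b * t)) * W t ^ 2)
      (2 * b * exp (-(b * t)) * ((1 - b * t) * W t ^ 2 + 2 * t * W t * deriv W t)) t := by
  have hlin := (hasDerivAt_id' t).const_mul (2 * b)
  have hexp := ((hasDerivAt_id' t).const_mul b).neg.exp
  refine ((hlin.mul hexp).mul (hW.hasDerivAt.pow 2)).congr_deriv ?_
  simp only [Pi.mul_apply, Pi.pow_apply, Pi.neg_apply]
  ring

theorem pauliForm_radialTrial (hR : 0 ≤ R) (hW : ContDiff ℝ 1 W) (hWR : W (R ^ 2) = 0) :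
    pauliForm b R (radialTrial b W)
      = π * ∫ t in (0 : ℝ)..R ^ 2, 4 * t * exp (-(b * t)) * deriv W t ^ 2 := by
  have hd : Differentiable ℝ W := hW.differentiable one_ne_zero
  have hc := hW.continuous
  have := hW.continuous_deriv le_rfl
  have hzero : ∫ t in (0 : ℝ)..R ^ 2,
      2 * b * exp (-(b * t)) * ((1 - b * t) * W t ^ 2 + 2 * t * W t * deriv W t) = 0 := by
    rw [intervalIntegral.integral_eq_sub_of_hasDerivAt
      (fun t _ => hasDerivAt_mul_exp_mul_sq (hd t))
      (Continuous.intervalIntegrable (by fun_prop) _ _), hWR]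
    simp
  have hkin : ∫ x in Metric.ball 0 R, magDens b (radialTrial b W) x
      = π * ∫ t in (0 : ℝ)..R ^ 2,
          exp (-(b * t)) * t * (4 * (deriv W t - b / 2 * W t) ^ 2 + b ^ 2 * W t ^ 2) := by
    simp only [magDens_radialTrial (hd _)]
    exact setIntegral_ball_comp_norm_sq (f := fun t =>
      exp (-(b * t)) * t * (4 * (deriv W t - b / 2 * W t) ^ 2 + b ^ 2 * W t ^ 2)) hR (by fun_prop)
  have hsum : (∫ t in (0 : ℝ)..R ^ 2,
          exp (-(b * t)) * t * (4 * (deriv W t - b / 2 * W t) ^ 2 + b ^ 2 * W t ^ 2))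
        - 2 * b * (∫ t in (0 : ℝ)..R ^ 2, exp (-(b * t)) * W t ^ 2)
        + ∫ t in (0 : ℝ)..R ^ 2,
          2 * b * exp (-(b * t)) * ((1 - b * t) * W t ^ 2 + 2 * t * W t * deriv W t)
      = ∫ t in (0 : ℝ)..R ^ 2, 4 * t * exp (-(b * t)) * deriv W t ^ 2 := by
    rw [← intervalIntegral.integral_const_mul,
      ← intervalIntegral.integral_sub (Continuous.intervalIntegrable (by fun_prop) _ _)
        (Continuous.intervalIntegrable (by fun_prop) _ _),
      ← intervalIntegral.integral_add (Continuous.intervalIntegrable (by fun_prop) _ _)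
        (Continuous.intervalIntegrable (by fun_prop) _ _)]
    congr 1 with t
    ring
  rw [pauliForm, hkin, setIntegral_norm_radialTrial_sq hR hc, ← hsum, hzero]
  ring

end RadialTrial

section CutoffProfile

variable {b S R ε t : ℝ}

/-- The factor `1 - exp (b (t - S))` of the approximate minimiser, where `t = |x|²` and `S = R²`,
cut off smoothly so that it vanishes already when `1 - ε ≤ exp (b (t - S))`. -/
def cutoffProfile (b S ε t : ℝ) : ℝ := softPos ε (1 - exp (b * (t - S)) - ε)

theorem contDiff_cutoffProfile {n : ℕ∞} : ContDiff ℝ n (cutoffProfile b S ε) :=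
  (contDiff_softPos ε).comp (by fun_prop)

theorem cutoffProfile_eq_zero (hε : 0 < ε) (ht : 1 - ε ≤ exp (b * (t - S))) :
    cutoffProfile b S ε t = 0 :=
  softPos_of_nonpos hε (by linarith)

theorem deriv_cutoffProfile_sq_le (hε : 0 < ε) :
    deriv (cutoffProfile b S ε) t ^ 2 ≤ b ^ 2 * exp (b * (t - S)) ^ 2 := by
  have hinner : HasDerivAt (fun t => 1 - exp (b * (t - S)) - ε) (-(exp (b * (t - S)) * b)) t := by
    simpa using
      (((((hasDerivAt_id' t).sub_const S).const_mul b).exp).const_sub 1).sub_const ε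
  have houter : DifferentiableAt ℝ (softPos ε) (1 - exp (b * (t - S)) - ε) :=
    (contDiff_softPos ε (n := 1)).differentiable one_ne_zero _
  have hcomp : HasDerivAt (cutoffProfile b S ε) _ t := houter.hasDerivAt.comp t hinner
  calc deriv (cutoffProfile b S ε) t ^ 2
      = deriv (softPos ε) (1 - exp (b * (t - S)) - ε) ^ 2 * (b ^ 2 * exp (b * (t - S)) ^ 2) := by
        rw [hcomp.deriv]
        ring
    _ ≤ b ^ 2 * exp (b * (t - S)) ^ 2 :=
        mul_le_of_le_one_left (by positivity) (deriv_softPos_sq_le_one hε _)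

theorem le_cutoffProfile_sq (hε : 0 < ε) :
    1 - 4 * ε - 2 * exp (b * (t - S)) ≤ cutoffProfile b S ε t ^ 2 := by
  have hle : 1 - exp (b * (t - S)) - ε - ε ≤ cutoffProfile b S ε t := sub_le_softPos hε _
  linarith [sq_nonneg (cutoffProfile b S ε t - 1)]

theorem isCptSmoothIn_radialTrial_cutoffProfile (hb : 0 < b) (hR : 0 < R) (hε : 0 < ε) :
    IsCptSmoothIn (Metric.ball 0 R) (radialTrial b (cutoffProfile b (R ^ 2) ε)) := by
  have htsupp : tsupport (radialTrial b (cutoffProfile b (R ^ 2) ε))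
      ⊆ {x | exp (b * (‖x‖ ^ 2 - R ^ 2)) ≤ 1 - ε} := by
    refine closure_minimal (fun x hx => ?_) (isClosed_le (by fun_prop) continuous_const)
    contrapose! hx
    simp [radialTrial, cutoffProfile_eq_zero hε (not_le.1 hx).le]
  have hball : tsupport (radialTrial b (cutoffProfile b (R ^ 2) ε)) ⊆ Metric.ball 0 R := by
    intro x hx
    have hlt : b * (‖x‖ ^ 2 - R ^ 2) < 0 := exp_lt_one_iff.1 ((htsupp hx).trans_lt (by linarith))
    have hsq : ‖x‖ ^ 2 < R ^ 2 := sub_neg.1 (neg_of_mul_neg_right hlt hb.le)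
    exact mem_ball_zero_iff.2 (lt_of_pow_lt_pow_left₀ 2 hR.le hsq)
  exact ⟨contDiff_radialTrial contDiff_cutoffProfile,
    (isCompact_closedBall 0 R).of_isClosed_subset (isClosed_tsupport _)
      (hball.trans Metric.ball_subset_closedBall), hball⟩

theorem integral_exp_neg_mul (hb : b ≠ 0) (S : ℝ) :
    ∫ t in (0 : ℝ)..S, exp (-(b * t)) = (1 - exp (-(b * S))) / b := by
  have h := intervalIntegral.integral_comp_mul_left exp (neg_ne_zero.2 hb) (a := 0) (b := S)
  simp only [neg_mul] at h
  rw [h, integral_exp]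
  simp only [mul_zero, neg_zero, exp_zero, smul_eq_mul]
  field_simp
  ring

theorem integral_exp_mul_sub_right (hb : b ≠ 0) (S : ℝ) :
    ∫ t in (0 : ℝ)..S, exp (b * (t - S)) = (1 - exp (-(b * S))) / b := by
  rw [← integral_exp_neg_mul hb]
  simpa [← mul_neg] using
    intervalIntegral.integral_comp_sub_left (fun t => exp (-(b * t))) S (a := 0) (b := S)

theorem exp_neg_mul_mul_exp_mul_sub (b S t : ℝ) :
    exp (-(b * t)) * exp (b * (t - S)) = exp (-(b * S)) := by
  rw [← exp_add]
  ring_nf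

theorem pauliForm_radialTrial_cutoffProfile_le (hb : 0 < b) (hR : 0 ≤ R) (hε : 0 < ε) :
    pauliForm b R (radialTrial b (cutoffProfile b (R ^ 2) ε))
      ≤ pauliLeadingTerm b R * (π / b) := by
  have hsm : ContDiff ℝ 1 (cutoffProfile b (R ^ 2) ε) := contDiff_cutoffProfile
  have := hsm.continuous_deriv le_rfl
  have hzero : cutoffProfile b (R ^ 2) ε (R ^ 2) = 0 := cutoffProfile_eq_zero hε (by simp [hε.le])
  have hbound : ∀ t ∈ Icc 0 (R ^ 2),
      4 * t * exp (-(b * t)) * deriv (cutoffProfile b (R ^ 2) ε) t ^ 2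
        ≤ 4 * b ^ 2 * R ^ 2 * exp (-(b * R ^ 2)) * exp (b * (t - R ^ 2)) := fun t ht =>
    calc 4 * t * exp (-(b * t)) * deriv (cutoffProfile b (R ^ 2) ε) t ^ 2
        ≤ 4 * R ^ 2 * exp (-(b * t)) * (b ^ 2 * exp (b * (t - R ^ 2)) ^ 2) := by
          gcongr
          exacts [ht.2, deriv_cutoffProfile_sq_le hε]
      _ = 4 * b ^ 2 * R ^ 2 * exp (-(b * R ^ 2)) * exp (b * (t - R ^ 2)) := by
          rw [← exp_neg_mul_mul_exp_mul_sub b (R ^ 2) t]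
          ring
  rw [pauliForm_radialTrial hR hsm hzero]
  calc π * ∫ t in (0 : ℝ)..R ^ 2, 4 * t * exp (-(b * t)) * deriv (cutoffProfile b (R ^ 2) ε) t ^ 2
      ≤ π * ∫ t in (0 : ℝ)..R ^ 2,
          4 * b ^ 2 * R ^ 2 * exp (-(b * R ^ 2)) * exp (b * (t - R ^ 2)) := by
        gcongr
        exact intervalIntegral.integral_mono_on (sq_nonneg R)
          (Continuous.intervalIntegrable (by fun_prop) _ _)
          (Continuous.intervalIntegrable (by fun_prop) _ _) hbound
    _ = pauliLeadingTerm b R * (π / b) * (1 - exp (-(b * R ^ 2))) := by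
        rw [intervalIntegral.integral_const_mul, integral_exp_mul_sub_right hb.ne',
          pauliLeadingTerm]
        ring
    _ ≤ pauliLeadingTerm b R * (π / b) := by
        refine mul_le_of_le_one_right ?_ (sub_le_self _ (exp_pos _).le)
        unfold pauliLeadingTerm
        positivity

theorem le_setIntegral_norm_radialTrial_cutoffProfile_sq (hb : 0 < b) (hR : 0 ≤ R)
    (hε : 0 < ε) :
    π / b * ((1 - 4 * ε) * (1 - exp (-(b * R ^ 2))) - 2 * (b * R ^ 2 * exp (-(b * R ^ 2))))
      ≤ ∫ x in Metric.ball 0 R, ‖radialTrial b (cutoffProfile b (R ^ 2) ε) x‖ ^ 2 := by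
  have hc : Continuous (cutoffProfile b (R ^ 2) ε) :=
    (contDiff_cutoffProfile (n := 1)).continuous
  rw [setIntegral_norm_radialTrial_sq hR hc]
  calc π / b * ((1 - 4 * ε) * (1 - exp (-(b * R ^ 2))) - 2 * (b * R ^ 2 * exp (-(b * R ^ 2))))
      = π * ∫ t in (0 : ℝ)..R ^ 2, ((1 - 4 * ε) * exp (-(b * t)) - 2 * exp (-(b * R ^ 2))) := by
        rw [intervalIntegral.integral_sub (Continuous.intervalIntegrable (by fun_prop) _ _)
          intervalIntegrable_const, intervalIntegral.integral_const_mul,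
          integral_exp_neg_mul hb.ne', intervalIntegral.integral_const, smul_eq_mul, sub_zero]
        field_simp
    _ ≤ π * ∫ t in (0 : ℝ)..R ^ 2, exp (-(b * t)) * cutoffProfile b (R ^ 2) ε t ^ 2 := by
        gcongr
        refine intervalIntegral.integral_mono_on (sq_nonneg R)
          (Continuous.intervalIntegrable (by fun_prop) _ _)
          (Continuous.intervalIntegrable (by fun_prop) _ _) fun t _ => ?_
        rw [← exp_neg_mul_mul_exp_mul_sub b (R ^ 2) t]
        have := mul_le_mul_of_nonneg_left (le_cutoffProfile_sq (b := b) (S := R ^ 2) (t := t) hε)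
          (exp_pos (-(b * t))).le
        linarith

theorem mul_exp_neg_le_two_div {T : ℝ} (hT : 0 < T) : T * exp (-T) ≤ 2 / T := by
  have hexp : T ^ 2 / 2 ≤ exp T := by
    simpa [Nat.factorial] using pow_div_factorial_le_exp T hT.le 2
  rw [exp_neg, ← div_eq_mul_inv, div_le_div_iff₀ (exp_pos T) hT]
  linarith

theorem one_sub_ten_div_le {T : ℝ} (hT : 1 ≤ T) :
    1 - 10 / T ≤ (1 - 4 * (1 / T)) * (1 - exp (-T)) - 2 * (T * exp (-T)) := by
  have hT0 : 0 < T := by linarith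
  have hTexp := mul_exp_neg_le_two_div hT0
  have hexp : exp (-T) ≤ T * exp (-T) := le_mul_of_one_le_left (exp_pos _).le hT
  have hprod : 0 ≤ 4 * (1 / T) * exp (-T) := by positivity
  rw [div_eq_mul_one_div] at hTexp ⊢
  linarith

theorem exists_pauliForm_le (hb : 0 < b) (hR : 0 < R) (hT : 20 ≤ b * R ^ 2) :
    ∃ u, IsCptSmoothIn (Metric.ball 0 R) u ∧ 0 < ∫ x in Metric.ball 0 R, ‖u x‖ ^ 2 ∧
      pauliForm b R u ≤ pauliLeadingTerm b R * (1 + 20 / (b * R ^ 2))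
        * ∫ x in Metric.ball 0 R, ‖u x‖ ^ 2 := by
  have hT0 : 0 < b * R ^ 2 := by positivity
  have hε : 0 < 1 / (b * R ^ 2) := by positivity
  have hM := pauliLeadingTerm_pos hb hR
  have hnorm : π / b * (1 - 10 / (b * R ^ 2)) ≤ ∫ x in Metric.ball 0 R,
      ‖radialTrial b (cutoffProfile b (R ^ 2) (1 / (b * R ^ 2))) x‖ ^ 2 :=
    (mul_le_mul_of_nonneg_left (one_sub_ten_div_le (by linarith)) (by positivity)).trans
      (le_setIntegral_norm_radialTrial_cutoffProfile_sq hb hR.le hε)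
  have hpos : 0 < 1 - 10 / (b * R ^ 2) := sub_pos.2 ((div_lt_one hT0).2 (by linarith))
  have hone : 1 ≤ (1 + 20 / (b * R ^ 2)) * (1 - 10 / (b * R ^ 2)) := by
    have : 20 / (b * R ^ 2) ≤ 1 := (div_le_one hT0).2 hT
    rw [show 10 / (b * R ^ 2) = 20 / (b * R ^ 2) / 2 by ring]
    nlinarith [show 0 < 20 / (b * R ^ 2) by positivity]
  refine ⟨_, isCptSmoothIn_radialTrial_cutoffProfile hb hR hε,
    lt_of_lt_of_le (by positivity) hnorm, ?_⟩
  calc pauliForm b R (radialTrial b (cutoffProfile b (R ^ 2) (1 / (b * R ^ 2))))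
      ≤ pauliLeadingTerm b R * (π / b) * 1 := by
        rw [mul_one]
        exact pauliForm_radialTrial_cutoffProfile_le hb hR.le hε
    _ ≤ pauliLeadingTerm b R * (π / b) * ((1 + 20 / (b * R ^ 2)) * (1 - 10 / (b * R ^ 2))) := by
        gcongr
    _ = pauliLeadingTerm b R * (1 + 20 / (b * R ^ 2)) * (π / b * (1 - 10 / (b * R ^ 2))) := by
        ring
    _ ≤ _ := by gcongr

end CutoffProfile

/-! ### The lowest eigenvalue -/

theorem pauliQ_ball_eq {h : ℝ} (hh : h ≠ 0) (B R : ℝ) (u : E2 → ℂ) :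
    pauliQ (Metric.ball 0 R) (fun x => -B * x 1 / 2) (fun x => B * x 0 / 2) (fun _ => B) h u
      = h ^ 2 * pauliForm (B / (2 * h)) R u := by
  have hh' : (h : ℂ) ≠ 0 := by exact_mod_cast hh
  have hscale : ∀ z : ℂ, ‖(h : ℂ) * z‖ ^ 2 = h ^ 2 * ‖z‖ ^ 2 := fun z => by
    rw [norm_mul, mul_pow, Complex.norm_real, norm_eq_abs, sq_abs]
  have hdens : ∀ x : E2, ‖(h : ℂ) * pdC 0 u x - Complex.I * ((-B * x 1 / 2 : ℝ) : ℂ) * u x‖ ^ 2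
      + ‖(h : ℂ) * pdC 1 u x - Complex.I * ((B * x 0 / 2 : ℝ) : ℂ) * u x‖ ^ 2
      = h ^ 2 * magDens (B / (2 * h)) u x := fun x => by
    rw [magDens, mul_add, ← hscale, ← hscale]
    congr 3
    · push_cast
      field_simp
      ring
    · push_cast
      field_simp
  simp only [pauliQ, hdens, pauliForm, integral_const_mul]
  field_simp

theorem sq_mul_pauliLeadingTerm {h : ℝ} (hh : h ≠ 0) (B R : ℝ) :
    h ^ 2 * pauliLeadingTerm (B / (2 * h)) R = B ^ 2 * R ^ 2 * exp (-B * R ^ 2 / (2 * h)) := by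
  rw [pauliLeadingTerm, show -B * R ^ 2 / (2 * h) = -(B / (2 * h) * R ^ 2) by ring]
  field_simp
  ring

theorem lambdaP_mem_Icc {Ω : Set E2} {A₁ A₂ B : E2 → ℝ} {h m M : ℝ} {u : E2 → ℂ}
    (hm : ∀ v, IsCptSmoothIn Ω v → m * ∫ x in Ω, ‖v x‖ ^ 2 ≤ pauliQ Ω A₁ A₂ B h v)
    (hu : IsCptSmoothIn Ω u) (hpos : 0 < ∫ x in Ω, ‖u x‖ ^ 2)
    (hM : pauliQ Ω A₁ A₂ B h u ≤ M * ∫ x in Ω, ‖u x‖ ^ 2) :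
    lambdaP Ω A₁ A₂ B h ∈ Icc m M := by
  have hlower : m ∈ lowerBounds {r | ∃ v : E2 → ℂ, IsCptSmoothIn Ω v ∧ v ≠ 0 ∧
      r = pauliQ Ω A₁ A₂ B h v / ∫ x in Ω, ‖v x‖ ^ 2} := by
    rintro r ⟨v, hv, hne, rfl⟩
    exact (le_div_iff₀ (setIntegral_norm_sq_pos hv hne)).2 (hm v hv)
  have hne : u ≠ 0 := by
    rintro rfl
    simp at hpos
  exact ⟨le_csInf ⟨_, u, hu, hne, rfl⟩ hlower,
    (csInf_le ⟨m, hlower⟩ ⟨u, hu, hne, rfl⟩).trans ((div_le_iff₀ hpos).2 hM)⟩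

theorem abs_lambdaP_sub_le {h B R : ℝ} (hh : 0 < h) (hB : 0 < B) (hR : 0 < R)
    (hT : 39 ≤ B / (2 * h) * R ^ 2) :
    |lambdaP (Metric.ball 0 R) (fun x => -B * x 1 / 2) (fun x => B * x 0 / 2) (fun _ => B) h
        - h ^ 2 * pauliLeadingTerm (B / (2 * h)) R|
      ≤ 39 / (B / (2 * h) * R ^ 2) * (h ^ 2 * pauliLeadingTerm (B / (2 * h)) R) := by
  have hb : 0 < B / (2 * h) := by positivity
  have hM := pauliLeadingTerm_pos hb hR
  obtain ⟨u, hu, hpos, hle⟩ := exists_pauliForm_le hb hR (by linarith)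
  have hmem := lambdaP_mem_Icc (A₁ := fun x => -B * x 1 / 2) (A₂ := fun x => B * x 0 / 2)
    (B := fun _ => B) (h := h)
    (m := h ^ 2 * (pauliLeadingTerm (B / (2 * h)) R * (1 - 39 / (B / (2 * h) * R ^ 2))))
    (M := h ^ 2 * (pauliLeadingTerm (B / (2 * h)) R * (1 + 39 / (B / (2 * h) * R ^ 2))))
    (fun v hv => ?_) hu hpos ?_
  · rw [abs_le]
    constructor <;> linarith [hmem.1, hmem.2]
  · rw [pauliQ_ball_eq hh.ne', mul_assoc]
    gcongr
    exact pauliLeadingTerm_mul_le_pauliForm hb hR hT hv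
  · rw [pauliQ_ball_eq hh.ne', mul_assoc]
    gcongr
    refine hle.trans ?_
    gcongr
    norm_num

end Development

/-- for the disk of radius `R` with constant magnetic field `B > 0`,
`λ_{P₋}(h) = B²R² e^{−BR²/(2h)} (1 + O(h))` as `h → 0⁺`. -/
theorem stmt8 (R B : ℝ) (hR : 0 < R) (hB : 0 < B) :
    ∃ C > 0, ∃ h₀ > 0, ∀ h : ℝ, 0 < h → h < h₀ →
      |lambdaP (Metric.ball (0 : E2) R)
          (fun x => -B * x 1 / 2) (fun x => B * x 0 / 2) (fun _ => B) h
        - B ^ 2 * R ^ 2 * Real.exp (-B * R ^ 2 / (2 * h))|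
      ≤ C * h * (B ^ 2 * R ^ 2 * Real.exp (-B * R ^ 2 / (2 * h))) := by
  refine ⟨78 / (B * R ^ 2), by positivity, B * R ^ 2 / 78, by positivity, fun h hh hlt => ?_⟩
  have hT : 39 ≤ B / (2 * h) * R ^ 2 := by
    rw [div_mul_eq_mul_div, le_div_iff₀ (by positivity)]
    linarith
  have hC : 39 / (B / (2 * h) * R ^ 2) = 78 / (B * R ^ 2) * h := by
    field_simp
    norm_num
  rw [← hC, ← sq_mul_pauliLeadingTerm hh.ne']
  exact abs_lambdaP_sub_le hh hB hR hT
end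
end

section
/- Let R > 0, B > 0, h > 0, let m ≥ 0 be an integer, and define v_m(r) := r^m ( e^{B(R²−r²)/(4h)} − e^{B(r²−R²)/(4h)} ). Then for every r with 0 < r ≤ R one has the differential identity −h² ( v_m''(r) + v_m'(r)/r ) + h² (m/r − Br/(2h))² v_m(r) − hB v_m(r) = 2(m+1) h B r^m e^{B(r²−R²)/(4h)}. -/
noncomputable section

/-!
Up to constant factors, the two summands of the quasimode are `f x = x ^ m * exp (c * x ^ 2 / 2)`
with `c = ∓B / (2h)`. The logarithmic derivative `g x = m / x + c * x` of `f` satisfies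
`g' + g / x = 2c`, hence `f'' + f' / x = (g ^ 2 + 2c) f`. For `c = -B / (2h)` the square `g ^ 2`
cancels the potential `(m / r - B r / (2h))²` and the constant `2c` cancels the Zeeman term `-h B`,
so the radial operator annihilates `f`. For `c = B / (2h)` the difference of the two squares is the
constant `2 m B / h`, so the operator multiplies `f` by `-2 (m + 1) h B`.
-/

open Real Topology

/-- The paper's `𝒫_m`: the radial part, in the sector of angular momentum `m`, of one spin component
of the semiclassical Pauli operator on the plane with constant magnetic field `B`. The angular
momentum may be any real number. Division and `deriv` make the value at `r` meaningful only if
`r ≠ 0`, `h ≠ 0` and `u` is twice differentiable at `r`. -/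
def radialPauli (h B m : ℝ) (u : ℝ → ℝ) (r : ℝ) : ℝ :=
  -h ^ 2 * (deriv (deriv u) r + deriv u r / r) + h ^ 2 * (m / r - B * r / (2 * h)) ^ 2 * u r
    - h * B * u r

/-- The product of a power and a Gaussian, the common shape of the two summands of the quasimode.
The Gaussian is normalized so that its logarithmic derivative is `c * x`. For `x < 0` the power is
the usual one when `m` is an integer, and `|x| ^ m * cos (m * π)` in general. -/
def rpowGaussian (m c x : ℝ) : ℝ :=
  x ^ m * exp (c * x ^ 2 / 2)

section RadialPauli

variable {h B m r : ℝ} {u w : ℝ → ℝ}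

lemma radialPauli_const_mul (a : ℝ) :
    radialPauli h B m (fun x => a * u x) r = a * radialPauli h B m u r := by
  have hderiv : deriv (fun x => a * u x) = fun x => a * deriv u x :=
    funext fun _ => deriv_const_mul_field a
  simp only [radialPauli, hderiv, deriv_const_mul_field]
  ring

lemma radialPauli_sub (hu : ContDiffAt ℝ 2 u r) (hw : ContDiffAt ℝ 2 w r) :
    radialPauli h B m (fun x => u x - w x) r =
      radialPauli h B m u r - radialPauli h B m w r := by
  have hderiv : deriv (fun x => u x - w x) r = deriv u r - deriv w r :=
    deriv_fun_sub (hu.differentiableAt two_ne_zero) (hw.differentiableAt two_ne_zero)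
  have hderiv2 : deriv (deriv fun x => u x - w x) r = deriv (deriv u) r - deriv (deriv w) r := by
    simpa only [iteratedDeriv_succ, iteratedDeriv_zero] using iteratedDeriv_fun_sub hu hw
  simp only [radialPauli, hderiv, hderiv2]
  ring

end RadialPauli

lemma deriv_deriv_of_eventually_hasDerivAt_mul {𝕜 : Type*} [NontriviallyNormedField 𝕜]
    {f g : 𝕜 → 𝕜} {g' x : 𝕜} (hf : ∀ᶠ y in 𝓝 x, HasDerivAt f (g y * f y) y)
    (hg : HasDerivAt g g' x) : deriv (deriv f) x = (g x ^ 2 + g') * f x := by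
  have hderiv : deriv f =ᶠ[𝓝 x] fun y => g y * f y := hf.mono fun _ hy => hy.deriv
  calc deriv (deriv f) x = deriv (fun y => g y * f y) x := hderiv.deriv_eq
    _ = g' * f x + g x * (g x * f x) := (hg.mul hf.self_of_nhds).deriv
    _ = (g x ^ 2 + g') * f x := by ring

lemma hasDerivAt_div_add_mul {𝕜 : Type*} [NontriviallyNormedField 𝕜] (m c : 𝕜) {x : 𝕜}
    (hx : x ≠ 0) : HasDerivAt (fun y => m / y + c * y) (-m / x ^ 2 + c) x := by
  have hdiv : HasDerivAt (fun y => m / y) (-m / x ^ 2) x := by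
    simpa using (hasDerivAt_const x m).fun_div (hasDerivAt_id x) hx
  simpa using hdiv.fun_add ((hasDerivAt_id x).const_mul c)

section RpowGaussian

variable {h B m c x : ℝ}

lemma contDiffAt_rpowGaussian {n : WithTop ℕ∞} (hx : x ≠ 0) :
    ContDiffAt ℝ n (rpowGaussian m c) x :=
  (contDiffAt_rpow_const_of_ne hx).mul (by fun_prop)

lemma hasDerivAt_rpowGaussian (hx : x ≠ 0) :
    HasDerivAt (rpowGaussian m c) ((m / x + c * x) * rpowGaussian m c x) x := by
  have hexponent : HasDerivAt (fun y => c * y ^ 2 / 2) (c * x) x :=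
    (((hasDerivAt_pow 2 x).const_mul c).div_const 2).congr_deriv (by push_cast; ring)
  refine ((hasDerivAt_rpow_const (.inl hx)).mul hexponent.exp).congr_deriv ?_
  rw [rpow_sub_one hx, rpowGaussian]
  ring

lemma deriv_deriv_add_deriv_div_rpowGaussian (hx : x ≠ 0) :
    deriv (deriv (rpowGaussian m c)) x + deriv (rpowGaussian m c) x / x =
      ((m / x + c * x) ^ 2 + 2 * c) * rpowGaussian m c x := by
  have hnear : ∀ᶠ y in 𝓝 x,
      HasDerivAt (rpowGaussian m c) ((m / y + c * y) * rpowGaussian m c y) y :=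
    (eventually_ne_nhds hx).mono fun _ hy => hasDerivAt_rpowGaussian hy
  rw [deriv_deriv_of_eventually_hasDerivAt_mul hnear (hasDerivAt_div_add_mul m c hx),
    (hasDerivAt_rpowGaussian hx).deriv]
  field_simp
  ring

lemma radialPauli_rpowGaussian (hx : x ≠ 0) :
    radialPauli h B m (rpowGaussian m c) x =
      (h ^ 2 * ((m / x - B * x / (2 * h)) ^ 2 - (m / x + c * x) ^ 2 - 2 * c) - h * B) *
        rpowGaussian m c x := by
  rw [radialPauli, deriv_deriv_add_deriv_div_rpowGaussian hx]
  ring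

lemma radialPauli_rpowGaussian_neg_eq_zero (hh : h ≠ 0) (hx : x ≠ 0) :
    radialPauli h B m (rpowGaussian m (-(B / (2 * h)))) x = 0 := by
  rw [radialPauli_rpowGaussian hx]
  field_simp
  ring

lemma radialPauli_rpowGaussian_eq_neg_mul (hh : h ≠ 0) (hx : x ≠ 0) :
    radialPauli h B m (rpowGaussian m (B / (2 * h))) x =
      -(2 * (m + 1) * h * B) * rpowGaussian m (B / (2 * h)) x := by
  rw [radialPauli_rpowGaussian hx]
  field_simp
  ring

lemma exp_mul_rpowGaussian (a : ℝ) :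
    exp a * rpowGaussian m c x = x ^ m * exp (a + c * x ^ 2 / 2) := by
  rw [rpowGaussian, exp_add]
  ring

end RpowGaussian

theorem stmt12_general (R B m : ℝ) {h r : ℝ} (hh : h ≠ 0) (hr : r ≠ 0) :
    radialPauli h B m
        (fun x => x ^ m * (exp (B * (R ^ 2 - x ^ 2) / (4 * h)) -
          exp (B * (x ^ 2 - R ^ 2) / (4 * h)))) r =
      2 * (m + 1) * h * B * r ^ m * exp (B * (r ^ 2 - R ^ 2) / (4 * h)) := by
  let a := B * R ^ 2 / (4 * h)
  let c := B / (2 * h)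
  have hdecay (x : ℝ) : exp a * rpowGaussian m (-c) x =
      x ^ m * exp (B * (R ^ 2 - x ^ 2) / (4 * h)) := by
    rw [exp_mul_rpowGaussian]
    congr 2
    simp only [a, c]
    ring
  have hgrowth (x : ℝ) : exp (-a) * rpowGaussian m c x =
      x ^ m * exp (B * (x ^ 2 - R ^ 2) / (4 * h)) := by
    rw [exp_mul_rpowGaussian]
    congr 2
    simp only [a, c]
    ring
  simp only [mul_sub (_ ^ m), ← hdecay, ← hgrowth]
  rw [radialPauli_sub (contDiffAt_const.mul (contDiffAt_rpowGaussian hr))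
      (contDiffAt_const.mul (contDiffAt_rpowGaussian hr)),
    radialPauli_const_mul, radialPauli_const_mul, radialPauli_rpowGaussian_neg_eq_zero hh hr,
    radialPauli_rpowGaussian_eq_neg_mul hh hr, mul_assoc _ (r ^ m), ← hgrowth]
  ring

/-- the quasimode `v_m(r) = r^m (e^{B(R²−r²)/(4h)} − e^{B(r²−R²)/(4h)})`
satisfies `𝒫_m v_m = 2(m+1) h B r^m e^{B(r²−R²)/(4h)}` on `(0, R]`. -/
theorem stmt12 (R B h : ℝ) (hR : 0 < R) (hB : 0 < B) (hh : 0 < h) (m : ℕ)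
    (v : ℝ → ℝ)
    (hv : v = fun r => r ^ m *
      (Real.exp (B * (R ^ 2 - r ^ 2) / (4 * h)) - Real.exp (B * (r ^ 2 - R ^ 2) / (4 * h))))
    (r : ℝ) (hr0 : 0 < r) (hrR : r ≤ R) :
    -h ^ 2 * (deriv (deriv v) r + deriv v r / r)
        + h ^ 2 * ((m : ℝ) / r - B * r / (2 * h)) ^ 2 * v r - h * B * v r
      = 2 * (m + 1) * h * B * r ^ m * Real.exp (B * (r ^ 2 - R ^ 2) / (4 * h)) := by
  simpa only [hv, radialPauli, rpow_natCast] using stmt12_general R B m hh.ne' hr0.ne'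
end
end
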